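/- arXiv:2307.14566 — 3 statements merged into one kernel-verified Lean document; each statement's English description precedes it below -/
import Mathlib

section
/- Let p ∈ ℕ and let 𝒫 be a partition of [p]×[2]×[2]. Then the function ℓ ↦ |As(⪰𝒫,=,ℓ)| is a quasi-polynomial function of ℓ with rational coefficients. -/
/-!
The set `AsGe Pt ℓ` consists of the points of the cube `{0, …, ℓ - 1}^ι` that solve a homogeneous
integer linear system, all of whose equations have coefficient sum zero. The quasi-polynomiality of
its size is an Ehrhart-type theorem; it is proved here by Elliott's reduction of linear Diophantine
systems, in a form that covers all `ℓ`, including `ℓ = 0`.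

*Reduction to positive weights* (`ncard_boxSol`, `isQP_boxSol`). Solutions are stable under adding
constants. So inclusion–exclusion shows that the second difference of `ℓ ↦ |AsGe Pt ℓ|` at `ℓ` is
the number `h (ℓ + 1)` of solutions with minimum exactly `0` and maximum exactly `ℓ + 1`. A sequence
whose differences are quasi-polynomial is itself quasi-polynomial, whatever its initial values
(`IsQP.of_diff`), so it is enough that `h` be quasi-polynomial on positive arguments.

*Open cones* (`isQP_spanSol`, `isQP_card_solutions`). With slack variables, `h` counts the solutions
in `ℕ` of a homogeneous system with prescribed total weight and conditions on the support. Fixing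
the support, what is counted are strictly positive solutions. The positive combinations of
generators `g` (a vector `c ∈ ℤ^ρ` of values of the equations, and a weight `l > 0`) have generating
function `∏ u / (1 - u)`, `u = x^c z^l`, and the solutions are the part of exponent `0` in `x`.

*Elliott reduction* (`gSeries_mul_gSeries`, `isQP_elim`). Comparing two coordinates gives
`u/(1-u) * w/(1-w) = uw/(1-uw) * (u/(1-u) + w/(1-w) + 1)`. Applied to generators on which an
equation has opposite signs, this eventually produces cones on which the equation is either
identically zero on the generators, or of one sign and not identically zero, in which case there are
no positive solutions. When all equations are gone, the generating function is `∏ z^l / (1 - z^l)`,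
whose coefficients are quasi-polynomial in positive degree (`isQP_of_trivial`).
-/

/-- Index set `[p] × [2] × [2]`. -/
abbrev Idx (p : ℕ) := Fin p × Fin 2 × Fin 2

/-- `β` and `γ` lie in the same class of the partition `Pt`. -/
def SameClass {p : ℕ} (Pt : Finpartition (Finset.univ : Finset (Idx p))) (β γ : Idx p) : Prop :=
  ∃ P ∈ Pt.parts, β ∈ P ∧ γ ∈ P

/-- The system of equations `τ(e,0,0)+τ(e,0,1) = τ(e,1,0)+τ(e,1,1)`. -/
def EqCond {p : ℕ} (τ : Idx p → ℕ) : Prop :=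
  ∀ e : Fin p, τ (e, 0, 0) + τ (e, 0, 1) = τ (e, 1, 0) + τ (e, 1, 1)

/-- `As(Pt,=,ℓ)`. -/
def AsEq {p : ℕ} (Pt : Finpartition (Finset.univ : Finset (Idx p))) (ℓ : ℕ) :
    Set (Idx p → ℕ) :=
  {τ | (∀ i, τ i < ℓ) ∧ EqCond τ ∧ ∀ β γ, τ β = τ γ ↔ SameClass Pt β γ}

/-- `As(⪰Pt,=,ℓ)`. -/
def AsGe {p : ℕ} (Pt : Finpartition (Finset.univ : Finset (Idx p))) (ℓ : ℕ) :
    Set (Idx p → ℕ) :=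
  {τ | (∀ i, τ i < ℓ) ∧ EqCond τ ∧ ∀ β γ, SameClass Pt β γ → τ β = τ γ}

/-- `Pt` is satisfiable. -/
def Satisfiable {p : ℕ} (Pt : Finpartition (Finset.univ : Finset (Idx p))) : Prop :=
  ∃ τ : Idx p → ℕ, EqCond τ ∧ ∀ β γ, τ β = τ γ ↔ SameClass Pt β γ

/-- `Pt` is globally even, locally odd. -/
def GELO {p : ℕ} (Pt : Finpartition (Finset.univ : Finset (Idx p))) : Prop :=
  (∀ P ∈ Pt.parts, Even P.card) ∧
    ∀ e : Fin p, ∃ P ∈ Pt.parts, Odd ((P.filter fun x => x.1 = e).card)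

/-- `Pt` is contributory. -/
def Contributory {p : ℕ} (Pt : Finpartition (Finset.univ : Finset (Idx p))) : Prop :=
  Satisfiable Pt ∧ GELO Pt

/-- The set of equations met by a class. -/
def eqnsOf {p : ℕ} (P : Finset (Idx p)) : Finset (Fin p) := P.image fun x => x.1

/-- `Pt` is separable: any two classes are equation-identical or equation-disjoint. -/
def Separable {p : ℕ} (Pt : Finpartition (Finset.univ : Finset (Idx p))) : Prop :=
  ∀ P ∈ Pt.parts, ∀ Q ∈ Pt.parts, eqnsOf P = eqnsOf Q ∨ Disjoint (eqnsOf P) (eqnsOf Q)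

/-- The number of classes of the quotient of `Pt` by equation-identicality. -/
def quotCard {p : ℕ} (Pt : Finpartition (Finset.univ : Finset (Idx p))) : ℕ :=
  (Pt.parts.image eqnsOf).card

/-- A twin class. -/
def IsTwin {p : ℕ} (P : Finset (Idx p)) : Prop :=
  ∃ e : Fin p, ∃ s : Fin 2, (e, s, 0) ∈ P ∧ (e, s, 1) ∈ P

/-- `Pt` is principal. -/
def Principal {p : ℕ} (Pt : Finpartition (Finset.univ : Finset (Idx p))) : Prop :=
  Contributory Pt ∧ Separable Pt ∧ ∀ P ∈ Pt.parts, P.card = 2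

/-- Membership in the group `W^(p)` of symmetries. -/
def InW {p : ℕ} (π : Equiv.Perm (Idx p)) : Prop :=
  ∃ ε : Equiv.Perm (Fin p), ∃ σ : Fin p → Equiv.Perm (Fin 2),
    ∃ F : Fin p → Fin 2 → Equiv.Perm (Fin 2),
      ∀ (e : Fin p) (s v : Fin 2),
        π (e, s, v) = (ε e, σ (ε e) s, F (ε e) (σ (ε e) s) v)

/-- The restriction of `Pt` to `{e} × [2] × [2]`. -/
def restrictTo {p : ℕ} (Pt : Finpartition (Finset.univ : Finset (Idx p))) (e : Fin p) :
    Finset (Finset (Idx p)) :=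
  (Pt.parts.image fun P => P.filter fun x => x.1 = e).filter fun Q => Q.Nonempty

/-! ### Sequences annihilated by a power of `S ^ m - 1` -/

/-- The shift operator `f ↦ (n ↦ f (n + 1))` on rational sequences. -/
noncomputable def seqShift : Module.End ℚ (ℕ → ℚ) := LinearMap.funLeft ℚ ℚ (· + 1)

lemma seqShift_pow_apply (m : ℕ) (f : ℕ → ℚ) (n : ℕ) : (seqShift ^ m) f n = f (n + m) := by
  induction m generalizing f with
  | zero => rfl
  | succ m ih =>
    rw [pow_succ, Module.End.mul_apply, ih]
    simp [seqShift, LinearMap.funLeft_apply, add_assoc]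

open Polynomial in
/-- A rational sequence is quasi-polynomial when `(S ^ m - 1) ^ D` annihilates it for some period
`m > 0` and some `D`, where `S` is the shift. See `IsQP.exists_polynomial` for the usual form. -/
def IsQP (f : ℕ → ℚ) : Prop :=
  ∃ m : ℕ, 0 < m ∧ ∃ D : ℕ, aeval seqShift ((X ^ m - 1 : ℚ[X]) ^ D) f = 0

open Polynomial in
lemma aeval_seqShift_of_dvd {P Q : ℚ[X]} (h : P ∣ Q) {f : ℕ → ℚ} (hf : aeval seqShift P f = 0) :
    aeval seqShift Q f = 0 := by
  obtain ⟨R, rfl⟩ := h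
  rw [mul_comm, map_mul, Module.End.mul_apply, hf, map_zero]

open Polynomial in
lemma X_pow_sub_one_dvd_mul (m n : ℕ) : (X ^ m - 1 : ℚ[X]) ∣ X ^ (m * n) - 1 := by
  simpa [pow_mul] using sub_dvd_pow_sub_pow (X ^ m : ℚ[X]) 1 n

lemma IsQP.zero : IsQP 0 := ⟨1, one_pos, 0, by simp⟩

lemma IsQP.add {f g : ℕ → ℚ} (hf : IsQP f) (hg : IsQP g) : IsQP (f + g) := by
  obtain ⟨m, hm, D, hf⟩ := hf
  obtain ⟨n, hn, E, hg⟩ := hg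
  refine ⟨m * n, Nat.mul_pos hm hn, D + E, ?_⟩
  rw [map_add, aeval_seqShift_of_dvd _ hf, aeval_seqShift_of_dvd _ hg, add_zero]
  · rw [mul_comm m n]
    exact (pow_dvd_pow_of_dvd (X_pow_sub_one_dvd_mul n m) E).trans (pow_dvd_pow _ (by omega))
  · exact (pow_dvd_pow_of_dvd (X_pow_sub_one_dvd_mul m n) D).trans (pow_dvd_pow _ (by omega))

lemma IsQP.sum {α : Type*} (s : Finset α) (f : α → ℕ → ℚ) (h : ∀ a ∈ s, IsQP (f a)) :
    IsQP (∑ a ∈ s, f a) := by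
  classical
  induction s using Finset.induction_on with
  | empty => simpa using IsQP.zero
  | insert a s ha ih =>
    rw [Finset.sum_insert ha]
    exact (h a (by simp)).add (ih fun b hb => h b (by simp [hb]))

open Polynomial in
/-- Quasi-polynomiality can be tested on a difference sequence; there is no condition on the
initial values. -/
lemma IsQP.of_diff {f g : ℕ → ℚ} {l : ℕ} (hl : 0 < l) (hg : IsQP g)
    (h : ∀ n, f (n + l) - f n = g n) : IsQP f := by
  obtain ⟨m, hm, D, hg⟩ := hg
  have hfg : aeval seqShift (X ^ l - 1 : ℚ[X]) f = g := by
    funext n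
    simp [seqShift_pow_apply, ← h n]
  refine ⟨m * l, Nat.mul_pos hm hl, D + 1, ?_⟩
  have key : aeval seqShift ((X ^ m - 1 : ℚ[X]) ^ D * (X ^ l - 1)) f = 0 := by
    rw [map_mul, Module.End.mul_apply, hfg, hg]
  refine aeval_seqShift_of_dvd ?_ key
  rw [pow_succ]
  refine mul_dvd_mul (pow_dvd_pow_of_dvd (X_pow_sub_one_dvd_mul m l) D) ?_
  rw [mul_comm m l]
  exact X_pow_sub_one_dvd_mul l m

open Polynomial in
lemma IsQP.comp_linear {f : ℕ → ℚ} (hf : IsQP f) (k j : ℕ) : IsQP fun t => f (k * t + j) := by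
  obtain ⟨m, hm, D, hf⟩ := hf
  rcases Nat.eq_zero_or_pos k with rfl | hk
  · refine ⟨1, one_pos, 1, ?_⟩
    funext n
    simp [seqShift, LinearMap.funLeft_apply]
  refine ⟨m, hm, D, ?_⟩
  have key : ∀ (D : ℕ) (g : ℕ → ℚ), aeval seqShift ((X ^ m - 1 : ℚ[X]) ^ D)
      (fun t => g (k * t + j)) =
      fun t => aeval seqShift ((X ^ (m * k) - 1 : ℚ[X]) ^ D) g (k * t + j) := by
    intro D
    induction D with
    | zero => intro g; simp
    | succ D ih =>
      intro g
      rw [pow_succ, pow_succ, map_mul, map_mul, Module.End.mul_apply, Module.End.mul_apply, ← ih]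
      congr 1
      funext t
      simp [seqShift_pow_apply, show k * (t + m) + j = k * t + j + m * k by ring]
  rw [key, aeval_seqShift_of_dvd (pow_dvd_pow_of_dvd (X_pow_sub_one_dvd_mul m k) D) hf]
  rfl

open Polynomial in
/-- Newton's forward difference formula along each residue class modulo the period. -/
lemma IsQP.exists_polynomial {f : ℕ → ℚ} (hf : IsQP f) :
    ∃ m : ℕ, 0 < m ∧ ∃ q : ℕ → Polynomial ℚ, ∀ n : ℕ, f n = (q (n % m)).eval (n : ℚ) := by
  obtain ⟨m, hm, D, hf⟩ := hf
  have hΔ : ∀ (k : ℕ) (g : ℕ → ℚ),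
      aeval seqShift ((X ^ m - 1 : ℚ[X]) ^ k) g = (fwdDiff m)^[k] g := by
    intro k
    induction k with
    | zero => intro g; simp
    | succ k ih =>
      intro g
      rw [pow_succ, map_mul, Module.End.mul_apply, ih, Function.iterate_succ_apply]
      congr 1
      funext t
      simp [seqShift_pow_apply, fwdDiff]
  have hvan : ∀ k, D ≤ k → (fwdDiff m)^[k] f = 0 := fun k hk => by
    rw [← hΔ]
    exact aeval_seqShift_of_dvd (pow_dvd_pow _ hk) hf
  refine ⟨m, hm, fun r => ∑ k ∈ Finset.range D, C ((fwdDiff m)^[k] f r / (k.factorial : ℚ)) *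
    (descPochhammer ℚ k).comp (C (1 / (m : ℚ)) * (X - C (r : ℚ))), fun n => ?_⟩
  have hn : n = n % m + (n / m) • m := by
    rw [smul_eq_mul, mul_comm, Nat.mod_add_div]
  have hquot : 1 / (m : ℚ) * ((n : ℚ) - ((n % m : ℕ) : ℚ)) = ((n / m : ℕ) : ℚ) := by
    have : (n : ℚ) = ((n % m : ℕ) : ℚ) + ((n / m : ℕ) : ℚ) * m := by exact_mod_cast hn
    have hm' : (m : ℚ) ≠ 0 := by positivity
    rw [this]
    field_simp
    simp
  have hN := shift_eq_sum_fwdDiff_iter m f (n / m) (n % m)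
  rw [← hn] at hN
  rw [hN, eval_finsetSum]
  have hterm : ∀ k, eval (n : ℚ) (C ((fwdDiff m)^[k] f (n % m) / (k.factorial : ℚ)) *
      (descPochhammer ℚ k).comp (C (1 / (m : ℚ)) * (X - C ((n % m : ℕ) : ℚ)))) =
      (n / m).choose k • (fwdDiff m)^[k] f (n % m) := by
    intro k
    rw [eval_mul, eval_C, eval_comp, eval_mul, eval_C, eval_sub, eval_X, eval_C, hquot,
      descPochhammer_eval_eq_descFactorial, Nat.descFactorial_eq_factorial_mul_choose,
      nsmul_eq_mul]
    have : (k.factorial : ℚ) ≠ 0 := by exact_mod_cast k.factorial_ne_zero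
    push_cast
    field_simp
  rw [Finset.sum_congr rfl fun k _ => hterm k]
  -- Both sums agree with the sum over a common range: the extra terms have a vanishing
  -- difference (`D ≤ k`) or a vanishing binomial coefficient (`n / m < k`).
  have h1 := Finset.sum_subset (Finset.range_mono (Nat.le_add_right D (n / m + 1)))
    (f := fun k => (n / m).choose k • (fwdDiff m)^[k] f (n % m)) (fun k _ hk => by
      simp only [Finset.mem_range, not_lt] at hk
      simp [hvan k hk])
  have h2 := Finset.sum_subset (Finset.range_mono (Nat.le_add_left (n / m + 1) D))
    (f := fun k => (n / m).choose k • (fwdDiff m)^[k] f (n % m)) (fun k _ hk => by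
      simp only [Finset.mem_range, not_lt] at hk
      simp [Nat.choose_eq_zero_of_lt (show n / m < k by omega)])
  rw [h1, h2]

/-! ### Generating functions of open simplicial cones -/

/-- The coefficient ring `ℚ[ℤ^ρ]`; its monomials record the value of a system of linear forms. -/
abbrev LaurentRing (ρ : Type*) := AddMonoidAlgebra ℚ (ρ → ℤ)

/-- The generator monomial `x^c z^l`. -/
noncomputable def gMono {ρ : Type*} (g : (ρ → ℤ) × ℕ) : PowerSeries (LaurentRing ρ) :=
  PowerSeries.monomial g.2 (AddMonoidAlgebra.single g.1 1)

/-- The series `u + u ^ 2 + u ^ 3 + ⋯ = u / (1 - u)` for the monomial `u = x^c z^l`, `l > 0`. -/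
noncomputable def gSeries {ρ : Type*} (g : (ρ → ℤ) × ℕ) : PowerSeries (LaurentRing ρ) :=
  PowerSeries.mk fun t =>
    if g.2 ∣ t ∧ 0 < t then AddMonoidAlgebra.single ((t / g.2) • g.1) 1 else 0

/-- The generating function of the combinations of the generators in `L` with positive integer
coefficients, counted with multiplicity. -/
noncomputable def coneSeries {ρ : Type*} (L : Multiset ((ρ → ℤ) × ℕ)) :
    PowerSeries (LaurentRing ρ) :=
  (L.map gSeries).prod

/-- The sequence of coefficients of `x^0 z^(t + 1)`. For a cone, it counts the positive combinations
of weight `t + 1` at which all linear forms vanish. The offset excludes weight `0`, where the cone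
without generators contributes. -/
noncomputable def zeroCount {ρ : Type*} (F : PowerSeries (LaurentRing ρ)) : ℕ → ℚ :=
  fun t => (PowerSeries.coeff (t + 1) F).coeff 0

lemma zeroCount_add {ρ : Type*} (F G : PowerSeries (LaurentRing ρ)) :
    zeroCount (F + G) = zeroCount F + zeroCount G := by
  funext t
  simp [zeroCount]

lemma coeff_monomial_mul_ite {R : Type*} [CommRing R] (n t : ℕ) (a : R) (F : PowerSeries R) :
    PowerSeries.coeff t (PowerSeries.monomial n a * F) =
      if n ≤ t then a * PowerSeries.coeff (t - n) F else 0 := by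
  rw [PowerSeries.monomial_eq_C_mul_X_pow, mul_assoc, PowerSeries.coeff_C_mul,
    PowerSeries.coeff_X_pow_mul']
  split_ifs <;> simp

lemma one_sub_gMono_mul_gSeries {ρ : Type*} {g : (ρ → ℤ) × ℕ} (hg : 0 < g.2) :
    (1 - gMono g) * gSeries g = gMono g := by
  ext1 t
  rw [sub_mul, one_mul, map_sub, gMono, coeff_monomial_mul_ite, gSeries,
    PowerSeries.coeff_mk, PowerSeries.coeff_mk, PowerSeries.coeff_monomial]
  by_cases hle : g.2 ≤ t
  · obtain ⟨s, rfl⟩ := Nat.exists_eq_add_of_le hle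
    rcases Nat.eq_zero_or_pos s with rfl | hs
    · simp [hg, Nat.div_self hg]
    · by_cases hds : g.2 ∣ s
      · simp [hds, hs, hs.ne', hg, AddMonoidAlgebra.single_mul_single, add_smul, add_comm]
      · simp [hle, hds, hs.ne']
  · have hnd : ¬ (g.2 ∣ t ∧ 0 < t) := fun h => hle (Nat.le_of_dvd h.2 h.1)
    have hne : t ≠ g.2 := by omega
    simp [hle, hnd, hne]

lemma isUnit_one_sub_gMono {ρ : Type*} {g : (ρ → ℤ) × ℕ} (hg : 0 < g.2) :
    IsUnit (1 - gMono g) := by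
  rw [PowerSeries.isUnit_iff_constantCoeff]
  have : PowerSeries.constantCoeff (gMono g) = 0 := by
    rw [← PowerSeries.coeff_zero_eq_constantCoeff_apply, gMono, PowerSeries.coeff_monomial,
      if_neg hg.ne]
  simp [this]

lemma gMono_add {ρ : Type*} (g h : (ρ → ℤ) × ℕ) : gMono (g + h) = gMono g * gMono h := by
  simp [gMono, PowerSeries.monomial_mul_monomial, AddMonoidAlgebra.single_mul_single]

/-- Elliott's identity: in the open cone spanned by `g` and `h`, the first coordinate is larger
than, smaller than, or equal to the second. -/
lemma gSeries_mul_gSeries {ρ : Type*} {g h : (ρ → ℤ) × ℕ} (hg : 0 < g.2) (hh : 0 < h.2) :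
    gSeries g * gSeries h =
      gSeries g * gSeries (g + h) + gSeries h * gSeries (g + h) + gSeries (g + h) := by
  have hgh : 0 < (g + h).2 := by simp [hg]
  have e1 := one_sub_gMono_mul_gSeries hg
  have e2 := one_sub_gMono_mul_gSeries hh
  have e3 := one_sub_gMono_mul_gSeries hgh
  have hu := ((isUnit_one_sub_gMono hg).mul (isUnit_one_sub_gMono hh)).mul
    (isUnit_one_sub_gMono hgh)
  rw [gMono_add] at e3 hu
  apply hu.mul_left_cancel
  generalize gSeries g = A at *
  generalize gSeries h = B at *
  generalize gSeries (g + h) = C at *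
  generalize gMono g = u at *
  generalize gMono h = w at *
  have l : (1 - u) * (1 - w) * (1 - u * w) * (A * B) = u * w * (1 - u * w) := by
    linear_combination (1 - u * w) * (B * (1 - w)) * e1 + (1 - u * w) * u * e2
  have r : (1 - u) * (1 - w) * (1 - u * w) * (A * C + B * C + C) = u * w * (1 - u * w) := by
    linear_combination ((1 - w) * u + (1 - u) * w + (1 - u) * (1 - w)) * e3 +
      ((1 - w) * ((1 - u * w) * C)) * e1 + ((1 - u) * ((1 - u * w) * C)) * e2
  rw [l, r]

/-- `SupportedAbove φ m F`: every monomial `x^v` occurring in `F` has `φ v ≥ m`. -/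
def SupportedAbove {ρ : Type*} (φ : (ρ → ℤ) →+ ℤ) (m : ℤ) (F : PowerSeries (LaurentRing ρ)) :
    Prop :=
  ∀ t v, (PowerSeries.coeff t F).coeff v ≠ 0 → m ≤ φ v

lemma SupportedAbove.mul {ρ : Type*} {φ : (ρ → ℤ) →+ ℤ} {m n : ℤ}
    {F G : PowerSeries (LaurentRing ρ)} (hF : SupportedAbove φ m F) (hG : SupportedAbove φ n G) :
    SupportedAbove φ (m + n) (F * G) := by
  classical
  intro t v hv
  rw [PowerSeries.coeff_mul, AddMonoidAlgebra.coeff_sum, Finset.sum_apply'] at hv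
  obtain ⟨⟨i, j⟩, -, hij⟩ := Finset.exists_ne_zero_of_sum_ne_zero hv
  rw [AddMonoidAlgebra.coeff_mul] at hij
  obtain ⟨a, ha, hij⟩ := Finset.exists_ne_zero_of_sum_ne_zero hij
  obtain ⟨b, hb, hij⟩ := Finset.exists_ne_zero_of_sum_ne_zero hij
  have hab : a + b = v := by
    by_contra hne
    exact hij (by simp [hne])
  rw [← hab, map_add]
  exact add_le_add (hF i a (by simpa using ha)) (hG j b (by simpa using hb))

lemma supportedAbove_one {ρ : Type*} (φ : (ρ → ℤ) →+ ℤ) : SupportedAbove φ 0 1 := by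
  classical
  intro t v hv
  rw [PowerSeries.coeff_one] at hv
  split_ifs at hv
  · rw [AddMonoidAlgebra.one_def, AddMonoidAlgebra.coeff_single, Finsupp.single_apply] at hv
    have : v = 0 := by
      by_contra hne
      exact hv (if_neg fun h => hne h.symm)
    simp [this]
  · simp at hv

lemma supportedAbove_gSeries {ρ : Type*} {φ : (ρ → ℤ) →+ ℤ} {g : (ρ → ℤ) × ℕ}
    (hφ : 0 ≤ φ g.1) : SupportedAbove φ (φ g.1) (gSeries g) := by
  classical
  intro t v hv
  rw [gSeries, PowerSeries.coeff_mk] at hv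
  split_ifs at hv with h
  · rw [AddMonoidAlgebra.coeff_single, Finsupp.single_apply] at hv
    have hv' : (t / g.2) • g.1 = v := by
      by_contra hne
      exact hv (if_neg hne)
    have hpos : 0 < t / g.2 := Nat.div_pos (Nat.le_of_dvd h.2 h.1) (Nat.pos_of_dvd_of_pos h.1 h.2)
    rw [← hv', map_nsmul, nsmul_eq_mul]
    exact le_mul_of_one_le_left hφ (by exact_mod_cast hpos)
  · simp at hv

lemma supportedAbove_coneSeries {ρ : Type*} {φ : (ρ → ℤ) →+ ℤ} (L : Multiset ((ρ → ℤ) × ℕ))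
    (hL : ∀ g ∈ L, 0 ≤ φ g.1) : SupportedAbove φ 0 (coneSeries L) := by
  induction L using Multiset.induction_on with
  | empty => simpa [coneSeries] using supportedAbove_one φ
  | cons g L ih =>
    have h1 := supportedAbove_gSeries (hL g (by simp))
    have h2 := h1.mul (ih fun h hh => hL h (by simp [hh]))
    intro t v hv
    have := h2 t v (by simpa [coneSeries] using hv)
    have := hL g (by simp)
    omega

lemma zeroCount_coneSeries_eq_zero {ρ : Type*} (φ : (ρ → ℤ) →+ ℤ) (g : (ρ → ℤ) × ℕ)
    (L : Multiset ((ρ → ℤ) × ℕ)) (hg : 0 < φ g.1) (hL : ∀ h ∈ L, 0 ≤ φ h.1) :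
    zeroCount (coneSeries (g ::ₘ L)) = 0 := by
  have h := (supportedAbove_gSeries hg.le).mul (supportedAbove_coneSeries L hL)
  funext t
  by_contra hne
  have := h (t + 1) 0 (by simpa [coneSeries, zeroCount] using hne)
  rw [map_zero] at this
  omega

lemma coneSeries_elliott {ρ : Type*} {g h : (ρ → ℤ) × ℕ} (L : Multiset ((ρ → ℤ) × ℕ))
    (hg : 0 < g.2) (hh : 0 < h.2) :
    coneSeries (g ::ₘ h ::ₘ L) = coneSeries (g ::ₘ (g + h) ::ₘ L) +
      coneSeries (h ::ₘ (g + h) ::ₘ L) + coneSeries ((g + h) ::ₘ L) := by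
  simp only [coneSeries, Multiset.map_cons, Multiset.prod_cons]
  rw [← mul_assoc, gSeries_mul_gSeries hg hh]
  ring

/-! ### Elimination of the linear equations -/

/-- With no equations left, adjoining a generator of weight `l` solves a difference equation with
step `l`. -/
lemma isQP_of_trivial {ρ : Type*} (L : Multiset ((ρ → ℤ) × ℕ))
    (hL : ∀ g ∈ L, 0 < g.2 ∧ g.1 = 0) : IsQP (zeroCount (coneSeries L)) := by
  induction L using Multiset.induction_on with
  | empty =>
    convert IsQP.zero
    funext t
    simp [coneSeries, zeroCount, PowerSeries.coeff_one]
  | cons g L ih =>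
    obtain ⟨hg, hg0⟩ := hL g (by simp)
    refine IsQP.of_diff hg (ih fun h hh => hL h (by simp [hh])) fun n => ?_
    have e : coneSeries (g ::ₘ L) - gMono g * coneSeries (g ::ₘ L) = gMono g * coneSeries L := by
      have e1 := one_sub_gMono_mul_gSeries hg
      simp only [coneSeries, Multiset.map_cons, Multiset.prod_cons]
      linear_combination (L.map gSeries).prod * e1
    have e2 := congrArg (fun F => (PowerSeries.coeff (n + 1 + g.2) F).coeff 0) e
    simp only [map_sub, gMono, hg0, coeff_monomial_mul_ite, ← AddMonoidAlgebra.one_def,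
      one_mul, le_add_iff_nonneg_left, zero_le, if_true, Nat.add_sub_cancel] at e2
    simpa [zeroCount, add_right_comm] using e2

/-- One step of the elimination: among the generators, `g` attains the maximal value `M + 1` of
`|φ|`. Elliott's identity applied to `g` and the generators on which `φ` has the opposite sign
removes the latter one by one; the two remaining terms have fewer generators with `|φ| = M + 1`. -/
lemma isQP_elim_step {ρ : Type*} (φ : (ρ → ℤ) →+ ℤ) (V : AddSubmonoid (ρ → ℤ)) (M n : ℕ)
    (ih : ∀ L : Multiset ((ρ → ℤ) × ℕ), (∀ g ∈ L, 0 < g.2 ∧ g.1 ∈ V) →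
      (∀ g ∈ L, |φ g.1| ≤ M + 1) → L.countP (fun g => |φ g.1| = M + 1) ≤ n →
      IsQP (zeroCount (coneSeries L)))
    (g : (ρ → ℤ) × ℕ) (hg : 0 < g.2 ∧ g.1 ∈ V) (hgM : φ g.1 = M + 1) (N : ℕ) :
    ∀ L : Multiset ((ρ → ℤ) × ℕ), (∀ g ∈ L, 0 < g.2 ∧ g.1 ∈ V) →
      (∀ g ∈ L, |φ g.1| ≤ M + 1) → L.countP (fun g => |φ g.1| = M + 1) ≤ n →
      L.countP (fun g => φ g.1 < 0) = N →
      IsQP (zeroCount (coneSeries (g ::ₘ L))) := by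
  induction N with
  | zero =>
    intro L _ _ _ h
    rw [Multiset.countP_eq_zero] at h
    rw [zeroCount_coneSeries_eq_zero φ g L (by omega) fun k hk => not_lt.1 (h k hk)]
    exact IsQP.zero
  | succ N ihN =>
    intro L h1 h2 h3 h4
    obtain ⟨h, hhL, hneg⟩ := Multiset.countP_pos.1 (show 0 < L.countP _ by rw [h4]; omega)
    obtain ⟨L, rfl⟩ := Multiset.exists_cons_of_mem hhL
    have hh := h1 h (by simp)
    have hhM := h2 h (by simp)
    have hsum : φ (g + h).1 = M + 1 + φ h.1 := by simp [hgM]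
    have habs : |φ (g + h).1| ≤ M := by rw [hsum]; rw [abs_le] at *; omega
    have hs : 0 < (g + h).2 ∧ (g + h).1 ∈ V := ⟨by simp [hg.1], V.add_mem hg.2 hh.2⟩
    have hL1 : ∀ k ∈ L, 0 < k.2 ∧ k.1 ∈ V := fun k hk => h1 k (by simp [hk])
    have hL2 : ∀ k ∈ L, |φ k.1| ≤ M + 1 := fun k hk => h2 k (by simp [hk])
    have hs1 : ∀ k ∈ (g + h) ::ₘ L, 0 < k.2 ∧ k.1 ∈ V := by
      simpa only [Multiset.forall_mem_cons] using ⟨hs, hL1⟩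
    have hs2 : ∀ k ∈ (g + h) ::ₘ L, |φ k.1| ≤ M + 1 := by
      simpa only [Multiset.forall_mem_cons] using ⟨by omega, hL2⟩
    have hsne : ¬ |φ (g + h).1| = M + 1 := by omega
    have hs3 : ((g + h) ::ₘ L).countP (fun g => |φ g.1| = M + 1) ≤ n := by
      rw [Multiset.countP_cons_of_neg (p := fun g : (ρ → ℤ) × ℕ => |φ g.1| = M + 1) _ hsne]
      exact (Multiset.countP_le_of_le _ (Multiset.le_cons_self _ _)).trans h3
    rw [coneSeries_elliott L hg.1 hh.1, zeroCount_add, zeroCount_add]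
    refine ((ihN _ hs1 hs2 hs3 ?_).add (ih _ ?_ ?_ ?_)).add (ih _ hs1 hs2 hs3)
    · rw [Multiset.countP_cons_of_pos (p := fun g : (ρ → ℤ) × ℕ => φ g.1 < 0) _ hneg] at h4
      rw [Multiset.countP_cons_of_neg (p := fun g : (ρ → ℤ) × ℕ => φ g.1 < 0) _ ?_]
      · omega
      · rw [abs_le] at hhM
        omega
    · rw [Multiset.forall_mem_cons]
      exact ⟨hh, hs1⟩
    · rw [Multiset.forall_mem_cons]
      exact ⟨hhM, hs2⟩
    · rw [Multiset.cons_swap,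
        Multiset.countP_cons_of_neg (p := fun g : (ρ → ℤ) × ℕ => |φ g.1| = M + 1) _ hsne]
      exact h3

/-- Elliott reduction eliminates one linear equation `φ = 0`. -/
lemma isQP_elim {ρ : Type*} (φ : (ρ → ℤ) →+ ℤ) (V : AddSubmonoid (ρ → ℤ))
    (ih : ∀ L : Multiset ((ρ → ℤ) × ℕ), (∀ g ∈ L, 0 < g.2 ∧ g.1 ∈ V) →
      (∀ g ∈ L, φ g.1 = 0) → IsQP (zeroCount (coneSeries L))) (M : ℕ) :
    ∀ L : Multiset ((ρ → ℤ) × ℕ), (∀ g ∈ L, 0 < g.2 ∧ g.1 ∈ V) →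
      (∀ g ∈ L, |φ g.1| ≤ M) → IsQP (zeroCount (coneSeries L)) := by
  induction M with
  | zero =>
    intro L h1 h2
    exact ih L h1 fun g hg => by simpa using h2 g hg
  | succ M ihM =>
    have key : ∀ (n : ℕ) (L : Multiset ((ρ → ℤ) × ℕ)), (∀ g ∈ L, 0 < g.2 ∧ g.1 ∈ V) →
        (∀ g ∈ L, |φ g.1| ≤ M + 1) → L.countP (fun g => |φ g.1| = M + 1) ≤ n →
        IsQP (zeroCount (coneSeries L)) := by
      intro n
      induction n with
      | zero =>
        intro L h1 h2 h3
        rw [Nat.le_zero, Multiset.countP_eq_zero] at h3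
        refine ihM L h1 fun g hg => ?_
        have := h2 g hg
        have := h3 g hg
        omega
      | succ n ihn =>
        intro L h1 h2 h3
        by_cases hlt : L.countP (fun g => |φ g.1| = M + 1) ≤ n
        · exact ihn L h1 h2 hlt
        obtain ⟨g, hgL, hgM⟩ := Multiset.countP_pos.1
          (show 0 < L.countP (fun g => |φ g.1| = M + 1) by omega)
        obtain ⟨L, rfl⟩ := Multiset.exists_cons_of_mem hgL
        rw [Multiset.countP_cons_of_pos (p := fun g : (ρ → ℤ) × ℕ => |φ g.1| = M + 1) _ hgM] at h3
        rw [Multiset.forall_mem_cons] at h1 h2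
        rcases (abs_eq (by positivity)).1 hgM with hpos | hneg
        · exact isQP_elim_step φ V M n ihn g h1.1 hpos _ L h1.2 h2.2 (by omega) rfl
        · exact isQP_elim_step (-φ) V M n (by simpa using ihn) g h1.1 (by simp [hneg]) _ L h1.2
            (by simpa using h2.2) (by simp only [AddMonoidHom.neg_apply, abs_neg]; omega) rfl
    intro L h1 h2
    exact key _ L h1 (by simpa using h2) le_rfl

theorem isQP_zeroCount_coneSeries {ρ : Type*} [Finite ρ] (L : Multiset ((ρ → ℤ) × ℕ))
    (hL : ∀ g ∈ L, 0 < g.2) : IsQP (zeroCount (coneSeries L)) := by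
  classical
  cases nonempty_fintype ρ
  have key : ∀ (s : Finset ρ) (L : Multiset ((ρ → ℤ) × ℕ)),
      (∀ g ∈ L, 0 < g.2 ∧ ∀ k ∉ s, g.1 k = 0) → IsQP (zeroCount (coneSeries L)) := by
    intro s
    induction s using Finset.induction_on with
    | empty =>
      intro L h
      exact isQP_of_trivial L fun g hg => ⟨(h g hg).1, funext fun k => (h g hg).2 k (by simp)⟩
    | insert a s _ ih =>
      intro L h
      let V : AddSubmonoid (ρ → ℤ) :=
        { carrier := {v | ∀ k ∉ insert a s, v k = 0}
          add_mem' := fun {x y} hx hy k hk => by simp [hx k hk, hy k hk]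
          zero_mem' := fun _ _ => rfl }
      refine isQP_elim (Pi.evalAddMonoidHom (fun _ => ℤ) a) V (fun L h1 h2 => ih L fun g hg =>
        ⟨(h1 g hg).1, fun k hk => ?_⟩) (L.map fun g => (g.1 a).natAbs).sum L h fun g hg => ?_
      · by_cases hka : k = a
        · rw [hka]; exact h2 g hg
        · exact (h1 g hg).2 k (by simp [hka, hk])
      · have := Multiset.single_le_sum (s := L.map fun g => (g.1 a).natAbs) (by simp) _
          (Multiset.mem_map_of_mem _ hg)
        rw [Pi.evalAddMonoidHom_apply, Int.abs_eq_natAbs]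
        exact_mod_cast this
  exact key Finset.univ L fun g hg => ⟨hL g hg, by simp⟩

/-! ### Counting solutions of linear systems -/

lemma coeff_coneSeries_unit {ρ ν : Type*} [DecidableEq ν] (c : ν → ρ → ℤ) (U : Finset ν)
    (t : ℕ) [DecidablePred fun l : ν →₀ ℕ => (∀ i ∈ U, 0 < l i) ∧ ∑ i ∈ U, l i • c i = 0] :
    (PowerSeries.coeff t (coneSeries (U.val.map fun i => (c i, 1)))).coeff 0 =
      (((U.finsuppAntidiag t).filter fun l =>
        (∀ i ∈ U, 0 < l i) ∧ ∑ i ∈ U, l i • c i = 0).card : ℚ) := by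
  classical
  have h1 : coneSeries (U.val.map fun i => (c i, 1)) = ∏ i ∈ U, gSeries (c i, 1) := by
    rw [coneSeries, Multiset.map_map]
    rfl
  have h2 : ∀ (n : ℕ) (v : ρ → ℤ), PowerSeries.coeff n (gSeries (v, 1)) =
      if 0 < n then AddMonoidAlgebra.single (n • v) 1 else 0 := fun n v => by
    simp [gSeries]
  rw [h1, PowerSeries.coeff_prod, AddMonoidAlgebra.coeff_sum, Finset.sum_apply', Finset.card_filter,
    Nat.cast_sum]
  refine Finset.sum_congr rfl fun l _ => ?_
  simp only [h2]
  rw [Finset.prod_ite_zero]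
  by_cases hpos : ∀ i ∈ U, 0 < l i
  · rw [if_pos hpos, AddMonoidAlgebra.prod_single, AddMonoidAlgebra.coeff_single,
      Finsupp.single_apply]
    simp only [Finset.prod_const_one, Nat.cast_ite, Nat.cast_one, Nat.cast_zero]
    exact if_congr (by simp only [and_iff_right hpos]) rfl rfl
  · rw [if_neg hpos, if_neg fun h => hpos h.1]
    simp

/-- Each support contributes one open cone, whence positive weights suffice. -/
theorem isQP_card_solutions {ρ ν : Type*} [Finite ρ] [Fintype ν] [DecidableEq ν]
    (c : ν → ρ → ℤ) (Z : Finset ν → Prop)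
    [DecidablePred fun l : ν →₀ ℕ => Z l.support ∧ ∑ i, l i • c i = 0] :
    IsQP fun t => ((((Finset.univ : Finset ν).finsuppAntidiag (t + 1)).filter fun l =>
      Z l.support ∧ ∑ i, l i • c i = 0).card : ℚ) := by
  classical
  convert IsQP.sum (Finset.univ.filter Z)
    (fun U => zeroCount (coneSeries (U.val.map fun i => (c i, 1)))) (fun U _ =>
      isQP_zeroCount_coneSeries _ (by simp)) using 1
  funext t
  rw [Finset.sum_apply, Finset.card_eq_sum_card_fiberwise (f := fun l : ν →₀ ℕ => l.support)
    (t := Finset.univ.filter Z) (fun l hl => by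
      simp only [Finset.coe_filter, Set.mem_ofPred_eq] at hl
      simp [hl.2.1]), Nat.cast_sum]
  refine Finset.sum_congr rfl fun U hU => ?_
  rw [zeroCount, coeff_coneSeries_unit]
  congr 2
  ext l
  have hZ : Z U := by simpa using hU
  simp only [Finset.mem_filter, Finset.mem_finsuppAntidiag, Finset.subset_univ, and_true]
  constructor
  · rintro ⟨⟨h1, h2, h3⟩, rfl⟩
    refine ⟨⟨?_, subset_rfl⟩, fun i hi => Nat.pos_of_ne_zero (by simpa using hi), ?_⟩
    · rw [← h1]
      exact Finset.sum_subset (Finset.subset_univ _) fun i _ hi => by simpa using hi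
    · rw [← h3]
      exact Finset.sum_subset (Finset.subset_univ _) fun i _ hi => by
        rw [show l i = 0 by simpa using hi, zero_smul]
  · rintro ⟨⟨h1, h2⟩, h3, h4⟩
    have hs : l.support = U := h2.antisymm fun i hi => by
      simpa using (h3 i hi).ne'
    refine ⟨⟨?_, hs ▸ hZ, ?_⟩, hs⟩
    · rw [← h1]
      exact (Finset.sum_subset (Finset.subset_univ _) fun i _ hi => by
        rw [← hs] at hi; simpa using hi).symm
    · rw [← h4]
      exact (Finset.sum_subset (Finset.subset_univ _) fun i _ hi => by
        rw [← hs] at hi; rw [show l i = 0 by simpa using hi, zero_smul]).symm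

/-! ### Solutions in a cube -/

/-- Solutions of the linear system `w` with values in `{0, …, ℓ - 1}`. -/
def boxSol {ι J : Type*} [Fintype ι] (w : J → ι → ℤ) (ℓ : ℕ) : Set (ι → ℕ) :=
  {τ | (∀ i, τ i < ℓ) ∧ ∀ j, ∑ i, w j i * (τ i : ℤ) = 0}

/-- Solutions of the linear system `w` with minimal value exactly `0` and maximal value
exactly `k`. -/
def spanSol {ι J : Type*} [Fintype ι] (w : J → ι → ℤ) (k : ℕ) : Set (ι → ℕ) :=
  {τ | (∀ i, τ i ≤ k) ∧ (∃ i, τ i = 0) ∧ (∃ i, τ i = k) ∧ ∀ j, ∑ i, w j i * (τ i : ℤ) = 0}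

/-- The equations `x i + y i = z` for `i : ι`, together with the system `w` on the `x i`, as
coefficient vectors of the unknowns `x i`, `y i`, `z`. -/
def slackCoeff {ι J : Type*} [DecidableEq ι] (w : J → ι → ℤ) :
    ι ⊕ ι ⊕ Unit → (ι ⊕ J → ℤ)
  | .inl i => Sum.elim (Pi.single i 1) fun j => w j i
  | .inr (.inl i) => Sum.elim (Pi.single i 1) 0
  | .inr (.inr _) => Sum.elim (-1) 0

lemma sum_slackCoeff_eq_zero {ι J : Type*} [Fintype ι] [DecidableEq ι] (w : J → ι → ℤ)
    (l : ι ⊕ ι ⊕ Unit → ℕ) : ∑ i, l i • slackCoeff w i = 0 ↔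
      (∀ i, l (.inl i) + l (.inr (.inl i)) = l (.inr (.inr ()))) ∧
        ∀ j, ∑ i, w j i * (l (.inl i) : ℤ) = 0 := by
  rw [funext_iff, Sum.forall]
  refine and_congr (forall_congr' fun i => ?_) (forall_congr' fun j => ?_)
  · simp [Fintype.sum_sum_type, slackCoeff, Finset.sum_apply, Pi.single_apply]
    rw [show l (.inr (.inr ())) = l (.inr (.inr PUnit.unit)) from rfl]
    omega
  · simp [Fintype.sum_sum_type, slackCoeff, Finset.sum_apply, mul_comm]

/-- Adding slack variables `k - τ i` and a variable for `k` turns the bounds into equations; the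
minimum and maximum conditions then only concern the support. -/
lemma isQP_spanSol {ι J : Type*} [Fintype ι] [Finite J] (w : J → ι → ℤ) :
    IsQP fun t => ((spanSol w (t + 1)).ncard : ℚ) := by
  classical
  let Z : Finset (ι ⊕ ι ⊕ Unit) → Prop := fun U =>
    (∃ i, Sum.inl i ∉ U) ∧ ∃ i, Sum.inr (Sum.inl i) ∉ U
  -- The total weight of the variables is `(|ι| + 1) * k`.
  convert (isQP_card_solutions (slackCoeff w) Z).comp_linear (Fintype.card ι + 1)
    (Fintype.card ι) using 2 with t
  congr 1
  have hsum : ∀ l : ι ⊕ ι ⊕ Unit → ℕ,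
      (∀ i, l (.inl i) + l (.inr (.inl i)) = l (.inr (.inr ()))) →
      ∑ i, l i = (Fintype.card ι + 1) * l (.inr (.inr ())) := by
    intro l hl
    rw [Fintype.sum_sum_type, Fintype.sum_sum_type, ← add_assoc, ← Finset.sum_add_distrib]
    simp [hl, add_mul]
  have hweight : (Fintype.card ι + 1) * t + Fintype.card ι + 1 = (Fintype.card ι + 1) * (t + 1) := by
    ring
  rw [hweight, ← Set.ncard_coe_finset, ← Set.InjOn.ncard_image (f := fun (l : ι ⊕ ι ⊕ Unit →₀ ℕ)
    (i : ι) => l (Sum.inl i))]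
  · congr 1
    ext τ
    simp only [spanSol, Set.mem_ofPred_eq, Set.mem_image, Finset.coe_filter,
      Finset.mem_finsuppAntidiag, Finset.subset_univ, and_true, sum_slackCoeff_eq_zero, Z,
      Finsupp.mem_support_iff, not_not]
    constructor
    · rintro ⟨h1, h2, ⟨i, hi⟩, h4⟩
      refine ⟨Finsupp.equivFunOnFinite.symm
        (Sum.elim τ (Sum.elim (fun i => t + 1 - τ i) fun _ => t + 1)), ⟨?_, ⟨?_, i, ?_⟩, ?_, ?_⟩, ?_⟩
      · rw [hsum]
        · simp
        · intro i; simpa using Nat.add_sub_of_le (h1 i)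
      · simpa using h2
      · simp [hi]
      · intro i; simpa using Nat.add_sub_of_le (h1 i)
      · simpa using h4
      · ext i; simp
    · rintro ⟨l, ⟨h1, ⟨⟨i, hi⟩, ⟨i', hi'⟩⟩, h2, h3⟩, rfl⟩
      rw [hsum _ h2] at h1
      have hk := Nat.eq_of_mul_eq_mul_left (Nat.succ_pos _) h1
      refine ⟨fun i => ?_, ⟨i, hi⟩, ⟨i', ?_⟩, h3⟩
      · have := h2 i; simp only; omega
      · have := h2 i'; simp only; omega
  · intro l hl l' hl' hll
    simp only [Finset.coe_filter, Set.mem_ofPred_eq, Finset.mem_finsuppAntidiag, Finset.subset_univ,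
      and_true, sum_slackCoeff_eq_zero] at hl hl'
    have hk := hl.1
    have hk' := hl'.1
    rw [hsum _ hl.2.2.1] at hk
    rw [hsum _ hl'.2.2.1] at hk'
    have e := Nat.eq_of_mul_eq_mul_left (Nat.succ_pos _) (hk.trans hk'.symm)
    ext x
    rcases x with i | i | u
    · exact congrFun hll i
    · have a1 := hl.2.2.1 i
      have a2 := hl'.2.2.1 i
      have a3 : l (.inl i) = l' (.inl i) := congrFun hll i
      omega
    · exact e

lemma boxSol_finite {ι J : Type*} [Fintype ι] (w : J → ι → ℤ) (ℓ : ℕ) : (boxSol w ℓ).Finite :=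
  (Set.Finite.pi' fun _ : ι => Set.finite_Iio ℓ).subset fun _ hτ i => hτ.1 i

/-- Solutions are invariant under translation by constants. -/
lemma sum_mul_add_one {ι J : Type*} [Fintype ι] {w : J → ι → ℤ} (hw : ∀ j, ∑ i, w j i = 0)
    (τ : ι → ℕ) (j : J) :
    ∑ i, w j i * ((τ i + 1 : ℕ) : ℤ) = ∑ i, w j i * (τ i : ℤ) := by
  simp [mul_add, Finset.sum_add_distrib, hw]

/-- Inclusion–exclusion for the two subsets of `boxSol w (ℓ + 2)` given by `τ ≥ 1` and by
`τ ≤ ℓ`: both are translates of `boxSol w (ℓ + 1)`, and they meet in a translate of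
`boxSol w ℓ`. -/
lemma ncard_boxSol {ι J : Type*} [Fintype ι] {w : J → ι → ℤ} (hw : ∀ j, ∑ i, w j i = 0)
    (ℓ : ℕ) : (boxSol w (ℓ + 2)).ncard + (boxSol w ℓ).ncard =
      (boxSol w (ℓ + 1)).ncard + (boxSol w (ℓ + 1)).ncard + (spanSol w (ℓ + 1)).ncard := by
  let up : (ι → ℕ) → (ι → ℕ) := fun τ i => τ i + 1
  have hup : Function.Injective up := fun τ τ' h => funext fun i => by
    have := congrFun h i
    simpa [up] using this
  have mem_up : ∀ (k : ℕ) (τ : ι → ℕ),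
      τ ∈ up '' boxSol w k ↔ τ ∈ boxSol w (k + 1) ∧ ∀ i, 1 ≤ τ i := by
    intro k τ
    constructor
    · rintro ⟨σ, ⟨h1, h2⟩, rfl⟩
      refine ⟨⟨fun i => ?_, fun j => ?_⟩, fun i => ?_⟩
      · have := h1 i; simp only [up]; omega
      · rw [← h2 j]; exact sum_mul_add_one hw σ j
      · simp [up]
    · rintro ⟨⟨h1, h2⟩, h3⟩
      have e : up (fun i => τ i - 1) = τ := funext fun i => Nat.sub_add_cancel (h3 i)
      refine ⟨fun i => τ i - 1, ⟨fun i => ?_, fun j => ?_⟩, e⟩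
      · have := h1 i; have := h3 i; simp only; omega
      · rw [← sum_mul_add_one hw]
        have : ∀ i, τ i - 1 + 1 = τ i := fun i => Nat.sub_add_cancel (h3 i)
        simpa only [this] using h2 j
  have hunion : boxSol w (ℓ + 2) =
      (up '' boxSol w (ℓ + 1) ∪ boxSol w (ℓ + 1)) ∪ spanSol w (ℓ + 1) := by
    ext τ
    simp only [Set.mem_union, mem_up]
    constructor
    · rintro ⟨h1, h2⟩
      by_cases ha : ∀ i, 1 ≤ τ i
      · exact .inl (.inl ⟨⟨h1, h2⟩, ha⟩)
      by_cases hb : ∀ i, τ i < ℓ + 1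
      · exact .inl (.inr ⟨hb, h2⟩)
      push Not at ha hb
      obtain ⟨a, ha⟩ := ha
      obtain ⟨b, hb⟩ := hb
      exact .inr ⟨fun i => Nat.lt_succ_iff.1 (h1 i), ⟨a, by omega⟩,
        ⟨b, le_antisymm (Nat.lt_succ_iff.1 (h1 b)) hb⟩, h2⟩
    · rintro ((⟨h, -⟩ | ⟨h1, h2⟩) | ⟨h1, -, -, h2⟩)
      · exact h
      · exact ⟨fun i => (h1 i).trans (Nat.lt_succ_self _), h2⟩
      · exact ⟨fun i => Nat.lt_succ_iff.2 (h1 i), h2⟩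
  have hdisj : Disjoint (up '' boxSol w (ℓ + 1) ∪ boxSol w (ℓ + 1)) (spanSol w (ℓ + 1)) := by
    rw [Set.disjoint_left]
    rintro τ h ⟨-, ⟨a, ha⟩, ⟨b, hb⟩, -⟩
    rw [Set.mem_union, mem_up] at h
    rcases h with ⟨-, h⟩ | ⟨h, -⟩
    · have := h a; omega
    · have := h b; omega
  have hinter : up '' boxSol w (ℓ + 1) ∩ boxSol w (ℓ + 1) = up '' boxSol w ℓ := by
    ext τ
    rw [Set.mem_inter_iff, mem_up, mem_up]
    constructor
    · rintro ⟨⟨-, h⟩, h'⟩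
      exact ⟨h', h⟩
    · rintro ⟨h', h⟩
      exact ⟨⟨⟨fun i => (h'.1 i).trans (Nat.lt_succ_self _), h'.2⟩, h⟩, h'⟩
  have hfin := boxSol_finite w (ℓ + 1)
  have hspan : (spanSol w (ℓ + 1)).Finite :=
    (boxSol_finite w (ℓ + 2)).subset (by rw [hunion]; exact Set.subset_union_right)
  have h1 := Set.ncard_union_add_ncard_inter (up '' boxSol w (ℓ + 1)) (boxSol w (ℓ + 1))
    (hfin.image _) hfin
  rw [hinter, Set.ncard_image_of_injective _ hup, Set.ncard_image_of_injective _ hup] at h1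
  rw [hunion, Set.ncard_union_eq hdisj ((hfin.image _).union hfin) hspan]
  omega

theorem isQP_boxSol {ι J : Type*} [Fintype ι] [Finite J] {w : J → ι → ℤ}
    (hw : ∀ j, ∑ i, w j i = 0) : IsQP fun ℓ => ((boxSol w ℓ).ncard : ℚ) := by
  refine IsQP.of_diff one_pos (IsQP.of_diff one_pos (isQP_spanSol w) (f := fun ℓ =>
    ((boxSol w (ℓ + 1)).ncard : ℚ) - (boxSol w ℓ).ncard) fun ℓ => ?_) fun ℓ => rfl
  have : ((boxSol w (ℓ + 2)).ncard : ℚ) + (boxSol w ℓ).ncard =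
      (boxSol w (ℓ + 1)).ncard + (boxSol w (ℓ + 1)).ncard + (spanSol w (ℓ + 1)).ncard := by
    exact_mod_cast ncard_boxSol hw ℓ
  linear_combination this

/-! ### Assignments -/

/-- The linear system defining `AsGe Pt ℓ`: one equation for each `e`, and the equation
`τ β = τ γ` for each pair in a common class. -/
def asGeSystem {p : ℕ} (Pt : Finpartition (Finset.univ : Finset (Idx p))) :
    Fin p ⊕ {x : Idx p × Idx p // SameClass Pt x.1 x.2} → Idx p → ℤ
  | .inl e => Pi.single (e, 0, 0) 1 + Pi.single (e, 0, 1) 1 - Pi.single (e, 1, 0) 1 -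
      Pi.single (e, 1, 1) 1
  | .inr x => Pi.single x.1.1 1 - Pi.single x.1.2 1

lemma sum_asGeSystem {p : ℕ} (Pt : Finpartition (Finset.univ : Finset (Idx p))) (j) :
    ∑ i, asGeSystem Pt j i = 0 := by
  rcases j with e | x <;>
    simp only [asGeSystem, Pi.add_apply, Pi.sub_apply, Finset.sum_add_distrib,
      Finset.sum_sub_distrib, Finset.sum_pi_single', Finset.mem_univ, if_true] <;> norm_num

lemma asGe_eq_boxSol {p : ℕ} (Pt : Finpartition (Finset.univ : Finset (Idx p))) (ℓ : ℕ) :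
    AsGe Pt ℓ = boxSol (asGeSystem Pt) ℓ := by
  ext τ
  have hs : ∀ β : Idx p, ∑ i, (Pi.single β 1 : Idx p → ℤ) i * (τ i : ℤ) = τ β := fun β => by
    simp [Pi.single_apply]
  simp only [AsGe, boxSol, Set.mem_ofPred_eq, Sum.forall, asGeSystem, Pi.add_apply, Pi.sub_apply,
    add_mul, sub_mul, Finset.sum_add_distrib, Finset.sum_sub_distrib, hs, EqCond, Subtype.forall,
    Prod.forall (p := fun x : Idx p × Idx p => ∀ _ : SameClass Pt x.1 x.2, _)]
  refine and_congr_right fun _ => and_congr (forall_congr' fun e => by omega)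
    (forall_congr' fun β => forall_congr' fun γ => forall_congr' fun _ => by omega)

/-- `ℓ ↦ |As(⪰𝒫,=,ℓ)|` is a quasi-polynomial function of `ℓ` with rational
coefficients. -/
theorem asGe_card_quasiPolynomial {p : ℕ}
    (Pt : Finpartition (Finset.univ : Finset (Idx p))) :
    ∃ m : ℕ, 0 < m ∧ ∃ q : ℕ → Polynomial ℚ,
      ∀ ℓ : ℕ, ((AsGe Pt ℓ).ncard : ℚ) = (q (ℓ % m)).eval (ℓ : ℚ) := by
  simp only [asGe_eq_boxSol]
  exact (isQP_boxSol (sum_asGeSystem Pt)).exists_polynomial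
end

section
/- Let p ∈ ℕ and let 𝒫 be a partition of [p]×[2]×[2]. Then the function ℓ ↦ |As(𝒫,=,ℓ)| is a quasi-polynomial function of ℓ with rational coefficients. -/
/-! ### Quasi-polynomials and piecewise quasi-polynomials -/

/-- `f` is periodic along some multiple `m • A` (`m > 0`) of the group `A`. -/
def IsPer {A : Type*} [AddCommGroup A] (f : A → ℚ) : Prop :=
  ∃ m : ℕ, 0 < m ∧ ∀ y z, f (y + m • z) = f y

/-- Generators of the quasi-polynomial functions on `A`: the integral linear forms and the
periodic functions. -/
def qpGens (A : Type*) [AddCommGroup A] : Set (A → ℚ) :=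
  {f | (∃ φ : A →+ ℤ, f = fun y => (φ y : ℚ)) ∨ IsPer f}

/-- The algebra of quasi-polynomial functions on `A`. -/
def QP (A : Type*) [AddCommGroup A] : Subalgebra ℚ (A → ℚ) :=
  Algebra.adjoin ℚ (qpGens A)

/-- The function `y ↦ [φ y > 0]`. -/
def posInd {A : Type*} [AddCommGroup A] (φ : A →+ ℤ) : A → ℚ :=
  fun y => if 0 < φ y then 1 else 0

/-- The algebra of functions on `A` that are piecewise quasi-polynomial with respect to a
subdivision into cones cut out by *homogeneous* integral linear inequalities. -/
def PQP (A : Type*) [AddCommGroup A] : Subalgebra ℚ (A → ℚ) :=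
  Algebra.adjoin ℚ (qpGens A ∪ Set.range posInd)

section Basic

variable {A : Type*} [AddCommGroup A]

lemma linear_mem_QP (φ : A →+ ℤ) : (fun y => (φ y : ℚ)) ∈ QP A :=
  Algebra.subset_adjoin (Or.inl ⟨φ, rfl⟩)

lemma IsPer.mem_QP {f : A → ℚ} (h : IsPer f) : f ∈ QP A :=
  Algebra.subset_adjoin (Or.inr h)

lemma QP_le_PQP : QP A ≤ PQP A := Algebra.adjoin_mono Set.subset_union_left

lemma posInd_mem (φ : A →+ ℤ) : posInd φ ∈ PQP A :=
  Algebra.subset_adjoin (Or.inr ⟨φ, rfl⟩)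

lemma posInd_of_pos {φ : A →+ ℤ} {y : A} (h : 0 < φ y) : posInd φ y = 1 := if_pos h

lemma posInd_of_not_pos {φ : A →+ ℤ} {y : A} (h : ¬0 < φ y) : posInd φ y = 0 := if_neg h

lemma IsPer.mul {f g : A → ℚ} (hf : IsPer f) (hg : IsPer g) : IsPer (f * g) := by
  obtain ⟨m, hm, hf⟩ := hf
  obtain ⟨n, hn, hg⟩ := hg
  refine ⟨m * n, Nat.mul_pos hm hn, fun y z => ?_⟩
  have h1 := hf y (n • z)
  have h2 := hg y (m • z)
  rw [← mul_nsmul'] at h1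
  rw [← mul_nsmul] at h2
  simp only [Pi.mul_apply, h1, h2]

lemma IsPer.comp {B : Type*} [AddCommGroup B] {f : A → ℚ} (hf : IsPer f) (θ : B →+ A) :
    IsPer (f ∘ θ) := by
  obtain ⟨m, hm, hf⟩ := hf
  exact ⟨m, hm, fun y z => by simp [hf]⟩

lemma QP_comp {B : Type*} [AddCommGroup B] {f : A → ℚ} (hf : f ∈ QP A) (θ : B →+ A) :
    f ∘ θ ∈ QP B := by
  induction hf using Algebra.adjoin_induction with
  | mem f hf =>
    obtain ⟨φ, rfl⟩ | hf := hf
    · exact linear_mem_QP (φ.comp θ)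
    · exact (hf.comp θ).mem_QP
  | algebraMap r => exact (QP B).algebraMap_mem r
  | add f g _ _ h1 h2 => exact (QP B).add_mem h1 h2
  | mul f g _ _ h1 h2 => exact (QP B).mul_mem h1 h2

lemma PQP_comp {B : Type*} [AddCommGroup B] {f : A → ℚ} (hf : f ∈ PQP A) (θ : B →+ A) :
    f ∘ θ ∈ PQP B := by
  induction hf using Algebra.adjoin_induction with
  | mem f hf =>
    obtain (⟨φ, rfl⟩ | hf) | ⟨φ, rfl⟩ := hf
    · exact QP_le_PQP (linear_mem_QP (φ.comp θ))
    · exact QP_le_PQP (hf.comp θ).mem_QP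
    · exact posInd_mem (φ.comp θ)
  | algebraMap r => exact (PQP B).algebraMap_mem r
  | add f g _ _ h1 h2 => exact (PQP B).add_mem h1 h2
  | mul f g _ _ h1 h2 => exact (PQP B).mul_mem h1 h2

end Basic

/-! ### Discrete antiderivatives of quasi-polynomials -/

section Antidifference

variable {A : Type*} [AddCommGroup A]

lemma polyFst_mem_QP (P : Polynomial ℚ) : (fun z : ℤ × A => P.eval (z.1 : ℚ)) ∈ QP (ℤ × A) := by
  have hX : (fun z : ℤ × A => (z.1 : ℚ)) ∈ QP (ℤ × A) := linear_mem_QP (AddMonoidHom.fst ℤ A)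
  induction P using Polynomial.induction_on' with
  | add P Q hP hQ =>
    have := (QP (ℤ × A)).add_mem hP hQ
    simpa [Pi.add_def] using this
  | monomial n a =>
    have := (QP (ℤ × A)).smul_mem ((QP (ℤ × A)).pow_mem hX n) a
    simpa [Pi.smul_def, Pi.pow_def] using this

/-- A periodic `q` splits as `∇Q + μ` with `∇` the backward difference in the first variable,
`Q` periodic, and `μ` the mean value of `q` over a period, which does not depend on that
variable. -/
lemma IsPer.split {q : ℤ × A → ℚ} (hq : IsPer q) :
    ∃ Q : ℤ × A → ℚ, IsPer Q ∧ ∃ μ : ℤ × A → ℚ, IsPer μ ∧ (∀ x y, μ (x - 1, y) = μ (x, y)) ∧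
      ∀ x y, q (x, y) = Q (x, y) - Q (x - 1, y) + μ (x, y) := by
  obtain ⟨m, hm, hq⟩ := hq
  have hm0 : (m : ℚ) ≠ 0 := by positivity
  have hq' : ∀ (x : ℤ) (y : A), q (x - m, y) = q (x, y) := fun x y => by
    have := hq (x - m, y) (1, 0)
    simp at this
    exact this.symm
  have hs : ∀ (c x : ℤ) (y : A) (a : ℤ) (b : A),
      q ((x, y) + m • (a, b) + (c, 0)) = q (x + c, y) := fun c x y a b => by
    have := hq (x + c, y) (a, b)
    rw [← this]
    congr 1
    ext <;> simp
    ring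
  refine ⟨fun z => (1 / m) * ∑ i ∈ Finset.range m, ((m : ℚ) - i) * q (z + (-(i : ℤ), 0)),
    ⟨m, hm, ?_⟩, fun z => (1 / m) * ∑ i ∈ Finset.range m, q (z + (-(i : ℤ) - 1, 0)),
    ⟨m, hm, ?_⟩, ?_, ?_⟩
  · rintro ⟨x, y⟩ ⟨a, b⟩
    simp only [hs]
    simp
  · rintro ⟨x, y⟩ ⟨a, b⟩
    simp only [hs]
    simp
  · intro x y
    have h1 := Finset.sum_range_succ (fun i : ℕ => q (x - 1 - i, y)) m
    have h2 := Finset.sum_range_succ' (fun i : ℕ => q (x - 1 - i, y)) m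
    rw [h1, hq'] at h2
    simp only [Nat.cast_zero, sub_zero] at h2
    have h3 := add_right_cancel h2
    simp only [Prod.mk_add_mk, add_zero]
    congr 1
    convert h3.symm using 3 with i _ i _
    · push_cast; congr 1; ring
    · congr 1; ring
  · intro x y
    simp only [Prod.mk_add_mk, add_zero]
    have h1 := Finset.sum_range_succ (fun i : ℕ => ((m : ℚ) - i) * q (x - i, y)) m
    have h2 := Finset.sum_range_succ' (fun i : ℕ => ((m : ℚ) - i) * q (x - i, y)) m
    rw [h1] at h2
    simp only [sub_self, zero_mul, add_zero, Nat.cast_zero, sub_zero] at h2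
    have e1 : ∀ i : ℕ, x + -(i : ℤ) = x - i := fun i => by ring
    have e2 : ∀ i : ℕ, x - 1 + -(i : ℤ) = x - ((i + 1 : ℕ) : ℤ) := fun i => by push_cast; ring
    have e3 : ∀ i : ℕ, x + (-(i : ℤ) - 1) = x - ((i + 1 : ℕ) : ℤ) := fun i => by push_cast; ring
    simp only [e1, e2, e3]
    rw [h2, ← mul_sub, ← mul_add, add_sub_right_comm, ← Finset.sum_sub_distrib,
      add_right_comm, ← Finset.sum_add_distrib, Finset.sum_eq_zero]
    · field_simp
      ring
    · intro i _
      push_cast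
      ring

/-- Antidifference of `x ^ j * q` for periodic `q`, by summation by parts. -/
lemma exists_antidiff_pow (j : ℕ) : ∀ q : ℤ × A → ℚ, IsPer q →
    ∃ T ∈ QP (ℤ × A), ∀ x y, T (x, y) - T (x - 1, y) = (x : ℚ) ^ j * q (x, y) := by
  induction j using Nat.strong_induction_on with
  | _ j ih =>
  intro q hq
  obtain ⟨Q, hQ, μ, hμ, hμ1, hsplit⟩ := hq.split
  have hQ1 : IsPer fun z : ℤ × A => Q (z + (-1, 0)) := by
    obtain ⟨m, hm, h⟩ := hQ
    exact ⟨m, hm, fun y z => by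
      change Q (_ + _) = Q _
      rw [add_right_comm, h]⟩
  choose! T hT hT' using fun i (hi : i < j) => ih i hi _ hQ1
  -- Faulhaber: the Bernoulli polynomial gives an antidifference of `x ^ j`.
  let B : Polynomial ℚ :=
    Polynomial.C (1 / ((j : ℚ) + 1)) * (Polynomial.bernoulli (j + 1)).comp (1 + Polynomial.X)
  have hB : ∀ x : ℤ, B.eval (x : ℚ) - B.eval ((x - 1 : ℤ) : ℚ) = (x : ℚ) ^ j := fun x => by
    have := Polynomial.bernoulli_eval_one_add (j + 1) (x : ℚ)
    simp only [B, Polynomial.eval_mul, Polynomial.eval_C, Polynomial.eval_comp,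
      Polynomial.eval_add, Polynomial.eval_one, Polynomial.eval_X, this]
    have hj : (j : ℚ) + 1 ≠ 0 := by positivity
    push_cast
    rw [show (1 : ℚ) + (x - 1) = x by ring]
    field_simp
    simp
  refine ⟨(fun z => (Polynomial.X ^ j : Polynomial ℚ).eval (z.1 : ℚ)) * Q
      + μ * (fun z => B.eval (z.1 : ℚ))
      + ∑ i ∈ Finset.range j, ((-1 : ℚ) ^ (i + j) * (j.choose i : ℚ)) • T i, ?_, ?_⟩
  · refine add_mem (add_mem (mul_mem (polyFst_mem_QP _) hQ.mem_QP)
      (mul_mem hμ.mem_QP (polyFst_mem_QP _))) (sum_mem fun i hi => ?_)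
    exact (QP (ℤ × A)).smul_mem (hT i (Finset.mem_range.1 hi)) _
  · intro x y
    have hsum : ∑ i ∈ Finset.range j, ((-1 : ℚ) ^ (i + j) * (j.choose i : ℚ)) * T i (x, y)
        - ∑ i ∈ Finset.range j, ((-1 : ℚ) ^ (i + j) * (j.choose i : ℚ)) * T i (x - 1, y)
        = (((x : ℚ) - 1) ^ j - (x : ℚ) ^ j) * Q (x - 1, y) := by
      rw [sub_pow, Finset.sum_range_succ, ← Finset.sum_sub_distrib]
      simp only [← two_mul, even_two, Even.mul_right, Even.neg_pow, one_pow, mul_one,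
        tsub_self, pow_zero, Nat.choose_self, Nat.cast_one, one_mul, add_sub_cancel_right]
      rw [Finset.sum_mul]
      refine Finset.sum_congr rfl fun i hi => ?_
      rw [← mul_sub, hT' i (Finset.mem_range.1 hi)]
      simp only [Prod.mk_add_mk, add_zero, ← sub_eq_add_neg]
      ring
    have hBx := hB x
    simp only [Pi.add_apply, Pi.mul_apply, Finset.sum_apply, Pi.smul_apply, smul_eq_mul,
      Polynomial.eval_pow, Polynomial.eval_X, hμ1]
    push_cast at hBx ⊢
    rw [hsplit x y]
    linear_combination hsum + μ (x, y) * hBx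

/-- Every quasi-polynomial in `(x, y)` has a quasi-polynomial antidifference in `x`. -/
lemma exists_antidiff {F : ℤ × A → ℚ} (hF : F ∈ QP (ℤ × A)) :
    ∃ T ∈ QP (ℤ × A), ∀ x y, T (x, y) - T (x - 1, y) = F (x, y) := by
  -- Stronger property that is stable under multiplication by generators.
  let K : (ℤ × A → ℚ) → Prop := fun h => ∀ (j : ℕ) (q : ℤ × A → ℚ), IsPer q →
    ∃ T ∈ QP (ℤ × A), ∀ x y, T (x, y) - T (x - 1, y) = h (x, y) * (x : ℚ) ^ j * q (x, y)
  have hadd : ∀ g h, K g → K h → K (g + h) := fun g h hg hh j q hq => by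
    obtain ⟨T, hT, hT'⟩ := hg j q hq
    obtain ⟨U, hU, hU'⟩ := hh j q hq
    refine ⟨T + U, add_mem hT hU, fun x y => ?_⟩
    simp only [Pi.add_apply]
    linear_combination hT' x y + hU' x y
  have key : ∀ h, K h → K (F * h) := by
    induction hF using Algebra.adjoin_induction with
    | mem f hf =>
      intro h hh
      obtain ⟨φ, rfl⟩ | hf := hf
      · intro j q hq
        obtain ⟨T, hT, hT'⟩ := hh (j + 1) q hq
        obtain ⟨U, hU, hU'⟩ := hh j q hq
        refine ⟨(φ (1, 0) : ℚ) • T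
            + (fun z : ℤ × A => ((φ.comp ((AddMonoidHom.inr ℤ A).comp
              (AddMonoidHom.snd ℤ A)) z : ℤ) : ℚ)) * U,
          add_mem ((QP (ℤ × A)).smul_mem hT _) (mul_mem (linear_mem_QP _) hU), fun x y => ?_⟩
        have hφ : φ (x, y) = x * φ (1, 0) + φ (0, y) := by
          rw [← smul_eq_mul, ← map_zsmul, ← map_add]
          simp
        simp only [Pi.add_apply, Pi.mul_apply, Pi.smul_apply, smul_eq_mul, hφ,
          AddMonoidHom.comp_apply, AddMonoidHom.coe_snd, AddMonoidHom.inr_apply]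
        push_cast
        linear_combination (φ (1, 0) : ℚ) * hT' x y + (φ (0, y) : ℚ) * hU' x y
      · intro j q hq
        obtain ⟨T, hT, hT'⟩ := hh j (f * q) (hf.mul hq)
        refine ⟨T, hT, fun x y => ?_⟩
        simp only [hT', Pi.mul_apply]
        ring
    | algebraMap r =>
      intro h hh j q hq
      obtain ⟨T, hT, hT'⟩ := hh j q hq
      refine ⟨r • T, (QP (ℤ × A)).smul_mem hT r, fun x y => ?_⟩
      simp only [Pi.smul_apply, smul_eq_mul, Pi.mul_apply, Pi.algebraMap_apply,
        Algebra.algebraMap_self, RingHom.id_apply]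
      linear_combination r * hT' x y
    | add f g _ _ h1 h2 =>
      intro h hh
      rw [add_mul]
      exact hadd _ _ (h1 h hh) (h2 h hh)
    | mul f g _ _ h1 h2 =>
      intro h hh
      rw [mul_assoc]
      exact h1 _ (h2 h hh)
  have h1 : K 1 := fun j q hq => by
    simpa using exists_antidiff_pow j q hq
  obtain ⟨T, hT, hT'⟩ := key 1 h1 0 1 ⟨1, one_pos, fun _ _ => rfl⟩
  exact ⟨T, hT, fun x y => by simpa using hT' x y⟩

end Antidifference

/-! ### Substituting floors of rational linear forms -/

section Substitution

variable {A : Type*} [AddCommGroup A]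

/-- An integer-valued quasi-polynomial whose reduction modulo every `m > 0` is periodic; these are
the functions that may be substituted for the first variable of a quasi-polynomial. -/
def IsSubst (s : A → ℤ) : Prop :=
  (fun y => (s y : ℚ)) ∈ QP A ∧
    ∀ m : ℕ, 0 < m → ∃ m' : ℕ, 0 < m' ∧ ∀ y z, (m : ℤ) ∣ s (y + m' • z) - s y

lemma IsSubst.neg_sub_one {s : A → ℤ} (hs : IsSubst s) : IsSubst fun y => -s y - 1 := by
  refine ⟨?_, fun m hm => ?_⟩
  · convert sub_mem (neg_mem hs.1) (one_mem (QP A)) using 1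
    ext y
    simp
  · obtain ⟨m', hm', h⟩ := hs.2 m hm
    refine ⟨m', hm', fun y z => ?_⟩
    rw [sub_sub_sub_cancel_right, neg_sub_neg, ← neg_sub]
    exact (h y z).neg_right

lemma isSubst_floor (φ : A →+ ℤ) {a : ℤ} (ha : 0 < a) : IsSubst fun y => φ y / a := by
  lift a to ℕ using ha.le
  have ha' : 0 < a := by exact_mod_cast ha
  have key : ∀ (m : ℕ) (y z : A), φ (y + (m * a) • z) = φ y + (m * φ z) * a := fun m y z => by
    rw [map_add, map_nsmul]
    simp
    ring
  refine ⟨?_, fun m hm => ⟨m * a, Nat.mul_pos hm ha', fun y z => ?_⟩⟩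
  · have h : IsPer fun y => ((φ y % a : ℤ) : ℚ) := ⟨a, ha', fun y z => by
      have := key 1 y z
      rw [one_mul] at this
      simp only [this, Int.add_mul_emod_self_right]⟩
    convert (QP A).smul_mem (sub_mem (linear_mem_QP φ) h.mem_QP) (1 / (a : ℚ)) using 1
    ext y
    simp only [Pi.smul_apply, Pi.sub_apply, smul_eq_mul]
    have h1 : ((φ y : ℤ) : ℚ) = a * ((φ y / a : ℤ) : ℚ) + ((φ y % a : ℤ) : ℚ) := by
      exact_mod_cast (Int.mul_ediv_add_emod (φ y) a).symm
    rw [h1]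
    have : (a : ℚ) ≠ 0 := by positivity
    field_simp
    ring
  · simp only [key, Int.add_mul_ediv_right _ _ ha.ne', add_sub_cancel_left]
    exact dvd_mul_right _ _

lemma QP_subst {s : A → ℤ} (hs : IsSubst s) {T : ℤ × A → ℚ} (hT : T ∈ QP (ℤ × A)) :
    (fun y => T (s y, y)) ∈ QP A := by
  induction hT using Algebra.adjoin_induction with
  | mem f hf =>
    obtain ⟨φ, rfl⟩ | ⟨m, hm, hf⟩ := hf
    · convert add_mem ((QP A).smul_mem hs.1 (φ (1, 0) : ℚ))
        (linear_mem_QP (φ.comp (AddMonoidHom.inr ℤ A))) using 1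
      ext y
      have hφ : φ (s y, y) = s y * φ (1, 0) + φ (0, y) := by
        rw [← smul_eq_mul, ← map_zsmul, ← map_add]
        simp
      simp [hφ, mul_comm]
    · obtain ⟨m', hm', h⟩ := hs.2 m hm
      refine IsPer.mem_QP ⟨m' * m, Nat.mul_pos hm' hm, fun y z => ?_⟩
      obtain ⟨w, hw⟩ := h y (m • z)
      have : (s (y + (m' * m) • z), y + (m' * m) • z) = (s y, y) + m • (w, m' • z) := by
        ext
        · rw [mul_nsmul']
          simp
          linarith
        · simp [mul_nsmul]
      simp only [this, hf]
  | algebraMap r => exact (QP A).algebraMap_mem r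
  | add f g _ _ h1 h2 => exact (QP A).add_mem h1 h2
  | mul f g _ _ h1 h2 => exact (QP A).mul_mem h1 h2

end Substitution

/-! ### Summation over one variable -/

section Summation

variable {A : Type*} [AddCommGroup A]

/-- The integers `x` with `u / a < x < -v / b` (for `a, b > 0`). -/
noncomputable def cellIoo (u a v b : ℤ) : Finset ℤ := Finset.Ioo (u / a) (-(v / b))

lemma mem_cellIoo {u a v b x : ℤ} (ha : 0 < a) (hb : 0 < b) :
    x ∈ cellIoo u a v b ↔ u < a * x ∧ v < -(b * x) := by
  rw [cellIoo, Finset.mem_Ioo, Int.ediv_lt_iff_lt_mul ha, lt_neg, Int.ediv_lt_iff_lt_mul hb]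
  simp only [mul_comm, mul_neg]

/-- All sums of `g` over `x` between two rational linear forms in `y` are piecewise
quasi-polynomial in `y`. -/
def Summable1 (g : ℤ × A → ℚ) : Prop :=
  ∀ (φ ψ : A →+ ℤ) (a b : ℤ), 0 < a → 0 < b →
    (fun y => ∑ x ∈ cellIoo (φ y) a (ψ y) b, g (x, y)) ∈ PQP A

lemma Summable1.add {g h : ℤ × A → ℚ} (hg : Summable1 g) (hh : Summable1 h) :
    Summable1 (g + h) := fun φ ψ a b ha hb => by
  convert add_mem (hg φ ψ a b ha hb) (hh φ ψ a b ha hb) using 1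
  ext y
  simp [Finset.sum_add_distrib]

lemma Summable1.smul {g : ℤ × A → ℚ} (hg : Summable1 g) (r : ℚ) :
    Summable1 (r • g) := fun φ ψ a b ha hb => by
  convert (PQP A).smul_mem (hg φ ψ a b ha hb) r using 1
  ext y
  simp [Finset.mul_sum]

lemma sum_Ioo_telescope (T : ℤ → ℚ) (u v : ℤ) (h : u < v) :
    ∑ x ∈ Finset.Ioo u v, (T x - T (x - 1)) = T (v - 1) - T u := by
  obtain ⟨n, rfl⟩ : ∃ n : ℕ, v = u + 1 + n := ⟨(v - (u + 1)).toNat, by omega⟩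
  induction n with
  | zero =>
    have : Finset.Ioo u (u + 1 + (0 : ℕ)) = ∅ := by
      ext x; simp only [Finset.mem_Ioo, Finset.notMem_empty, iff_false]; omega
    rw [this]
    simp
  | succ n ih =>
    have : Finset.Ioo u (u + 1 + (n + 1 : ℕ)) = insert (u + 1 + n) (Finset.Ioo u (u + 1 + n)) := by
      ext x; simp only [Finset.mem_Ioo, Finset.mem_insert]; omega
    rw [this, Finset.sum_insert (by simp), ih (by omega)]
    push_cast
    rw [show u + 1 + (n + 1 : ℤ) - 1 = u + 1 + n by ring]
    ring

lemma summable1_of_QP {F : ℤ × A → ℚ} (hF : F ∈ QP (ℤ × A)) : Summable1 F := by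
  intro φ ψ a b ha hb
  obtain ⟨T, hT, hT'⟩ := exists_antidiff hF
  have h1 := QP_subst (isSubst_floor ψ hb).neg_sub_one hT
  have h2 := QP_subst (isSubst_floor φ ha) hT
  -- The interval is empty unless `φ y / a < -ψ y / b`, a homogeneous condition.
  convert mul_mem (posInd_mem (-(b • φ + a • ψ))) (QP_le_PQP (sub_mem h1 h2)) using 1
  ext y
  simp only [Pi.mul_apply, Pi.sub_apply]
  by_cases h : 0 < -(b * φ y + a * ψ y)
  · rw [posInd_of_pos h, one_mul]
    simp only [← hT']
    refine sum_Ioo_telescope (fun x => T (x, y)) _ _ ?_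
    have e1 := Int.mul_ediv_self_le (x := φ y) ha.ne'
    have e2 := Int.mul_ediv_self_le (x := ψ y) hb.ne'
    by_contra hc
    have h3 : 0 ≤ φ y / a + ψ y / b := by linarith
    have h4 : 0 ≤ (a * b) * (φ y / a + ψ y / b) := by positivity
    nlinarith [mul_le_mul_of_nonneg_left e1 hb.le, mul_le_mul_of_nonneg_left e2 ha.le]
  · rw [posInd_of_not_pos h, zero_mul]
    refine Finset.sum_eq_zero fun x hx => ?_
    rw [mem_cellIoo ha hb] at hx
    exfalso
    nlinarith [mul_lt_mul_of_pos_left hx.1 hb, mul_lt_mul_of_pos_left hx.2 ha]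

lemma Summable1.posInd_mul {g : ℤ × A → ℚ} (hg : Summable1 g) (θ : ℤ × A →+ ℤ) :
    Summable1 (posInd θ * g) := by
  intro φ ψ a b ha hb
  obtain ⟨c, hc⟩ : ∃ c, c = θ (1, 0) := ⟨_, rfl⟩
  obtain ⟨η, hη⟩ : ∃ η : A →+ ℤ, η = θ.comp (AddMonoidHom.inr ℤ A) := ⟨_, rfl⟩
  have hθ : ∀ x y, θ (x, y) = c * x + η y := fun x y => by
    rw [hc, hη, mul_comm, ← smul_eq_mul, ← map_zsmul, AddMonoidHom.comp_apply, ← map_add]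
    simp
  simp only [Pi.mul_apply, posInd, hθ, ite_mul, one_mul, zero_mul, ← Finset.sum_filter]
  rcases lt_trichotomy c 0 with h0 | h0 | h0
  · -- The condition is an upper bound on `x`; it replaces the old one exactly when it is sharper.
    have hc' : 0 < -c := by omega
    have h1 := posInd_mem (-(-c • ψ + b • η))
    convert add_mem (mul_mem h1 (hg φ (-η) a (-c) ha hc'))
      (mul_mem (sub_mem (one_mem _) h1) (hg φ ψ a b ha hb)) using 1
    ext y
    simp only [Pi.add_apply, Pi.mul_apply, Pi.sub_apply, Pi.one_apply]
    by_cases h : 0 < -(-c * ψ y + b * η y)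
    · rw [posInd_of_pos h, one_mul, sub_self, zero_mul, add_zero]
      refine Finset.sum_congr ?_ fun _ _ => rfl
      ext x
      rw [Finset.mem_filter, mem_cellIoo ha hb, mem_cellIoo ha hc', AddMonoidHom.neg_apply]
      constructor
      · rintro ⟨⟨h2, h3⟩, h4⟩
        exact ⟨h2, by linarith⟩
      · rintro ⟨h2, h3⟩
        refine ⟨⟨h2, ?_⟩, by linarith⟩
        -- `-c * ψ y < -(b * η y) < -c * -(b * x)`
        refine lt_of_mul_lt_mul_left (a := -c) ?_ hc'.le
        nlinarith [mul_lt_mul_of_pos_left h3 hb]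
    · rw [posInd_of_not_pos h, zero_mul, sub_zero, one_mul, zero_add]
      refine Finset.sum_congr ?_ fun _ _ => rfl
      ext x
      rw [Finset.mem_filter, mem_cellIoo ha hb]
      refine and_iff_left_of_imp fun h2 => ?_
      refine pos_of_mul_pos_right (a := b) ?_ hb.le
      nlinarith [mul_lt_mul_of_pos_left h2.2 hc']
  · convert mul_mem (posInd_mem η) (hg φ ψ a b ha hb) using 1
    ext y
    simp only [Pi.mul_apply, h0, zero_mul, zero_add]
    by_cases h : 0 < η y
    · simp [posInd_of_pos h, h]
    · simp [posInd_of_not_pos h, h]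
  · -- The condition is a lower bound on `x`; it replaces the old one exactly when it is sharper.
    have h1 := posInd_mem (-(c • φ + a • η))
    convert add_mem (mul_mem h1 (hg (-η) ψ c b h0 hb))
      (mul_mem (sub_mem (one_mem _) h1) (hg φ ψ a b ha hb)) using 1
    ext y
    simp only [Pi.add_apply, Pi.mul_apply, Pi.sub_apply, Pi.one_apply]
    by_cases h : 0 < -(c * φ y + a * η y)
    · rw [posInd_of_pos h, one_mul, sub_self, zero_mul, add_zero]
      refine Finset.sum_congr ?_ fun _ _ => rfl
      ext x
      rw [Finset.mem_filter, mem_cellIoo ha hb, mem_cellIoo h0 hb, AddMonoidHom.neg_apply]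
      constructor
      · rintro ⟨⟨h2, h3⟩, h4⟩
        exact ⟨by linarith, h3⟩
      · rintro ⟨h2, h3⟩
        refine ⟨⟨?_, h3⟩, by linarith⟩
        -- `c * φ y < -(a * η y) < c * (a * x)`
        refine lt_of_mul_lt_mul_left (a := c) ?_ h0.le
        nlinarith [mul_lt_mul_of_pos_left h2 ha]
    · rw [posInd_of_not_pos h, zero_mul, sub_zero, one_mul, zero_add]
      refine Finset.sum_congr ?_ fun _ _ => rfl
      ext x
      rw [Finset.mem_filter, mem_cellIoo ha hb]
      refine and_iff_left_of_imp fun h2 => ?_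
      refine pos_of_mul_pos_right (a := a) ?_ ha.le
      nlinarith [mul_lt_mul_of_pos_left h2.1 h0]

/-- Piecewise quasi-polynomials are stable under summation over one variable. -/
lemma summable1_of_PQP {g : ℤ × A → ℚ} (hg : g ∈ PQP (ℤ × A)) : Summable1 g := by
  -- Stronger property that is stable under multiplication by generators.
  let K : (ℤ × A → ℚ) → Prop := fun h => ∀ F ∈ QP (ℤ × A), Summable1 (h * F)
  have key : ∀ h, K h → K (g * h) := by
    induction hg using Algebra.adjoin_induction with
    | mem f hf =>
      intro h hh F hF
      obtain hf | ⟨θ, rfl⟩ := hf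
      · have := hh (f * F) (mul_mem (Algebra.subset_adjoin hf) hF)
        rwa [mul_left_comm, ← mul_assoc] at this
      · rw [mul_assoc]
        exact (hh F hF).posInd_mul θ
    | algebraMap r =>
      intro h hh F hF
      rw [mul_assoc, ← Algebra.smul_def]
      exact (hh F hF).smul r
    | add f g _ _ h1 h2 =>
      intro h hh F hF
      rw [add_mul, add_mul]
      exact (h1 h hh F hF).add (h2 h hh F hF)
    | mul f g _ _ h1 h2 =>
      intro h hh
      rw [mul_assoc]
      exact h1 _ (h2 h hh)
  have h1 : K 1 := fun F hF => by simpa using summable1_of_QP hF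
  simpa using key 1 h1 1 (one_mem _)

lemma PQP_sum_Ioo {g : ℤ × A → ℚ} (hg : g ∈ PQP (ℤ × A)) (ν : A →+ ℤ) :
    (fun y => ∑ x ∈ Finset.Ioo 0 (ν y), g (x, y)) ∈ PQP A := by
  simpa [cellIoo] using summable1_of_PQP hg 0 (-ν) 1 1 one_pos one_pos

lemma PQP_sum_pi (N : ℕ) : ∀ {A : Type*} [AddCommGroup A] (ν : A →+ ℤ)
    {g : (Fin N → ℤ) × A → ℚ}, g ∈ PQP ((Fin N → ℤ) × A) →
    (fun y => ∑ x ∈ Fintype.piFinset fun _ : Fin N => Finset.Ioo 0 (ν y), g (x, y)) ∈ PQP A := by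
  induction N with
  | zero =>
    intro A _ ν g hg
    convert PQP_comp hg (AddMonoidHom.inr (Fin 0 → ℤ) A) using 1
    ext y
    rw [Finset.sum_eq_single_of_mem (0 : Fin 0 → ℤ) (Fintype.mem_piFinset.2 fun i => i.elim0)
      (fun b _ hb => (hb (Subsingleton.elim _ _)).elim)]
    rfl
  | succ N ih =>
    intro A _ ν g hg
    let θ : ℤ × ((Fin N → ℤ) × A) →+ (Fin (N + 1) → ℤ) × A :=
      { toFun := fun z => (Fin.cons z.1 z.2.1, z.2.2)
        map_zero' := by
          ext i
          · refine Fin.cases ?_ (fun i => ?_) i <;> simp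
          · simp
        map_add' := fun z w => by
          ext i
          · refine Fin.cases ?_ (fun i => ?_) i <;> simp
          · simp }
    have h1 := PQP_sum_Ioo (PQP_comp hg θ) (ν.comp (AddMonoidHom.snd (Fin N → ℤ) A))
    convert ih ν h1 using 1
    ext y
    rw [Finset.sum_comm' (s' := fun _ => Fintype.piFinset fun _ : Fin N => Finset.Ioo 0 (ν y))
      (t' := Finset.Ioo 0 (ν y)) (by simp [and_comm]), ← Finset.sum_product']
    refine Finset.sum_bij' (fun x _ => (x 0, Fin.tail x)) (fun z _ => Fin.cons z.1 z.2)
      ?_ ?_ ?_ ?_ ?_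
    · intro x hx
      simp only [Fintype.mem_piFinset, Finset.mem_product] at hx ⊢
      exact ⟨hx 0, fun i => hx i.succ⟩
    · intro z hz
      simp only [Fintype.mem_piFinset, Finset.mem_product] at hz ⊢
      refine Fin.cases ?_ (fun i => ?_)
      · simpa using hz.1
      · simpa using hz.2 i
    · simp
    · simp
    · simp [θ]

end Summation

/-! ### Functions of one variable, and predicates -/

/-- On positive integers a piecewise quasi-polynomial function of one variable is an honest
quasi-polynomial, as homogeneous inequalities in one variable are constant there. -/
lemma PQP_int {g : ℤ → ℚ} (hg : g ∈ PQP ℤ) :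
    ∃ m : ℕ, 0 < m ∧ ∃ q : ℕ → Polynomial ℚ,
      ∀ ℓ : ℕ, g (ℓ + 1) = (q (ℓ % m)).eval (ℓ : ℚ) := by
  have hlin : ∀ (φ : ℤ →+ ℤ) (x : ℤ), φ x = x * φ 1 := fun φ x => by
    rw [← smul_eq_mul, ← map_zsmul]
    simp
  induction hg using Algebra.adjoin_induction with
  | mem f hf =>
    obtain (⟨φ, rfl⟩ | ⟨m, hm, hf⟩) | ⟨φ, rfl⟩ := hf
    · refine ⟨1, one_pos, fun _ => (Polynomial.X + 1) * Polynomial.C (φ 1 : ℚ), fun ℓ => ?_⟩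
      simp [hlin φ ((ℓ : ℤ) + 1)]
    · refine ⟨m, hm, fun r => Polynomial.C (f (r + 1)), fun ℓ => ?_⟩
      rw [Polynomial.eval_C, ← hf (((ℓ % m : ℕ) : ℤ) + 1) ((ℓ / m : ℕ) : ℤ)]
      congr 1
      have : (ℓ : ℤ) = ((ℓ % m : ℕ) : ℤ) + m * ((ℓ / m : ℕ) : ℤ) := by
        exact_mod_cast (Nat.mod_add_div ℓ m).symm
      rw [nsmul_eq_mul]
      linarith
    · refine ⟨1, one_pos, fun _ => Polynomial.C (if 0 < φ 1 then 1 else 0), fun ℓ => ?_⟩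
      have h : 0 < φ ((ℓ : ℤ) + 1) ↔ 0 < φ 1 := by
        rw [hlin φ ((ℓ : ℤ) + 1)]
        exact mul_pos_iff_of_pos_left (by positivity)
      rw [Polynomial.eval_C]
      exact if_congr h rfl rfl
  | algebraMap r =>
    exact ⟨1, one_pos, fun _ => Polynomial.C r, fun ℓ => by simp⟩
  | add f g _ _ h1 h2 =>
    obtain ⟨m, hm, q, hq⟩ := h1
    obtain ⟨n, hn, r, hr⟩ := h2
    refine ⟨m * n, Nat.mul_pos hm hn, fun k => q (k % m) + r (k % n), fun ℓ => ?_⟩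
    simp [hq, hr]
  | mul f g _ _ h1 h2 =>
    obtain ⟨m, hm, q, hq⟩ := h1
    obtain ⟨n, hn, r, hr⟩ := h2
    refine ⟨m * n, Nat.mul_pos hm hn, fun k => q (k % m) * r (k % n), fun ℓ => ?_⟩
    simp [hq, hr]

section Predicates

open Classical in
/-- The indicator function of `P` is piecewise quasi-polynomial. This holds for Boolean combinations
of homogeneous linear inequalities. -/
def IsCone {A : Type*} [AddCommGroup A] (P : A → Prop) : Prop :=
  (fun y => if P y then (1 : ℚ) else 0) ∈ PQP A

variable {A : Type*} [AddCommGroup A]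

lemma isCone_const (p : Prop) : IsCone fun _ : A => p := by
  by_cases h : p
  · simp only [IsCone, h, if_true]
    exact one_mem (PQP A)
  · simp only [IsCone, h, if_false]
    exact zero_mem (PQP A)

lemma IsCone.not {P : A → Prop} (hP : IsCone P) : IsCone fun y => ¬P y := by
  unfold IsCone
  convert sub_mem (one_mem (PQP A)) hP using 1
  ext y
  by_cases h : P y <;> simp [h]

lemma IsCone.and {P Q : A → Prop} (hP : IsCone P) (hQ : IsCone Q) :
    IsCone fun y => P y ∧ Q y := by
  unfold IsCone
  convert mul_mem hP hQ using 1
  ext y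
  by_cases h : P y <;> by_cases h' : Q y <;> simp [h, h']

lemma IsCone.all {ι : Type*} [Fintype ι] {P : ι → A → Prop} (hP : ∀ i, IsCone (P i)) :
    IsCone fun y => ∀ i, P i y := by
  classical
  unfold IsCone
  convert prod_mem (S := PQP A) (t := Finset.univ) fun i _ => hP i using 1
  ext y
  rw [Finset.prod_apply, Finset.prod_boole]
  simp

lemma IsCone.iff_const {P : A → Prop} (hP : IsCone P) (p : Prop) : IsCone fun y => P y ↔ p := by
  by_cases h : p
  · simpa [h] using hP
  · simpa [h] using hP.not

lemma isCone_pos (φ : A →+ ℤ) : IsCone fun y => 0 < φ y := by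
  unfold IsCone
  convert posInd_mem φ using 1
  ext y
  by_cases h : 0 < φ y
  · simp [posInd_of_pos h, h]
  · rw [posInd_of_not_pos h, if_neg h]

lemma isCone_eq (φ ψ : A →+ ℤ) : IsCone fun y => φ y = ψ y := by
  convert (isCone_pos (φ - ψ)).not.and (isCone_pos (ψ - φ)).not using 2 with y
  simp only [AddMonoidHom.sub_apply]
  omega

end Predicates

/-! ### Counting assignments -/

/-- The equations and the (in)equalities defining `AsEq`, for integer-valued functions. -/
def IntAs {p : ℕ} (Pt : Finpartition (Finset.univ : Finset (Idx p))) (y : Idx p → ℤ) : Prop :=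
  (∀ e : Fin p, y (e, 0, 0) + y (e, 0, 1) = y (e, 1, 0) + y (e, 1, 1)) ∧
    ∀ i : Idx p × Idx p, y i.1 = y i.2 ↔ SameClass Pt i.1 i.2

lemma isCone_intAs {p : ℕ} (Pt : Finpartition (Finset.univ : Finset (Idx p))) :
    IsCone (IntAs Pt) := by
  let ev : Idx p → (Idx p → ℤ) →+ ℤ := Pi.evalAddMonoidHom _
  refine IsCone.and (IsCone.all fun e => ?_) (IsCone.all fun i => ?_)
  · exact isCone_eq (ev (e, 0, 0) + ev (e, 0, 1)) (ev (e, 1, 0) + ev (e, 1, 1))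
  · exact (isCone_eq (ev i.1) (ev i.2)).iff_const _

open Classical in
/-- The shift `τ ↦ τ + 1` identifies `AsEq Pt ℓ` with the solutions of `IntAs` whose values lie
strictly between `0` and `ℓ + 1`. -/
lemma ncard_asEq {p : ℕ} (Pt : Finpartition (Finset.univ : Finset (Idx p))) (ℓ : ℕ) {N : ℕ}
    (e : Idx p ≃ Fin N) :
    ((AsEq Pt ℓ).ncard : ℚ) = ∑ x ∈ Fintype.piFinset fun _ : Fin N => Finset.Ioo (0 : ℤ) (ℓ + 1),
      if IntAs Pt (x ∘ e) then (1 : ℚ) else 0 := by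
  rw [Finset.sum_boole, ← Set.ncard_coe_finset]
  congr 1
  refine Set.ncard_congr (fun τ _ i => (τ (e.symm i) : ℤ) + 1) ?_ ?_ ?_
  · rintro τ ⟨h1, h2, h3⟩
    simp only [Finset.coe_filter, Set.mem_ofPred_eq, Fintype.mem_piFinset, Finset.mem_Ioo]
    refine ⟨fun i => ?_, fun k => ?_, fun i => ?_⟩
    · have := h1 (e.symm i)
      omega
    · have := h2 k
      simp only [Function.comp_apply, Equiv.symm_apply_apply]
      omega
    · rw [← h3]
      simp
  · intro τ σ _ _ h
    ext i
    simpa using congrFun h (e i)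
  · intro x hx
    simp only [Finset.coe_filter, Set.mem_ofPred_eq, Fintype.mem_piFinset, Finset.mem_Ioo] at hx
    obtain ⟨h1, h2, h3⟩ := hx
    have hc : ∀ i, (((x (e i) - 1).toNat : ℕ) : ℤ) = x (e i) - 1 := fun i =>
      Int.toNat_of_nonneg (by have := (h1 (e i)).1; omega)
    refine ⟨fun i => (x (e i) - 1).toNat, ⟨fun i => ?_, fun k => ?_, fun β γ => ?_⟩, ?_⟩
    · have := h1 (e i)
      have := hc i
      beta_reduce
      omega
    · have h := h2 k
      simp only [Function.comp_apply] at h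
      zify
      simp only [hc]
      omega
    · rw [← h3 (β, γ), ← Nat.cast_inj (R := ℤ), hc, hc]
      simp
    · ext i
      rw [hc, Equiv.apply_symm_apply, sub_add_cancel]

/-- `ℓ ↦ |As(𝒫,=,ℓ)|` is a quasi-polynomial function of `ℓ` with rational
coefficients. -/
theorem asEq_card_quasiPolynomial {p : ℕ}
    (Pt : Finpartition (Finset.univ : Finset (Idx p))) :
    ∃ m : ℕ, 0 < m ∧ ∃ q : ℕ → Polynomial ℚ,
      ∀ ℓ : ℕ, ((AsEq Pt ℓ).ncard : ℚ) = (q (ℓ % m)).eval (ℓ : ℚ) := by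
  classical
  let e := Fintype.equivFin (Idx p)
  let θ : (Fin (Fintype.card (Idx p)) → ℤ) × ℤ →+ (Idx p → ℤ) :=
    { toFun := fun z => z.1 ∘ e
      map_zero' := rfl
      map_add' := fun _ _ => rfl }
  have h := PQP_sum_pi _ (AddMonoidHom.id ℤ) (PQP_comp (isCone_intAs Pt) θ)
  obtain ⟨m, hm, q, hq⟩ := PQP_int h
  refine ⟨m, hm, q, fun ℓ => ?_⟩
  rw [← hq, ncard_asEq Pt ℓ e]
  simp only [AddMonoidHom.id_apply, Function.comp_apply]
  rfl
end

section
/- Let p ∈ ℕ, let 𝒫 be a contributory and separable partition of [p]×[2]×[2], and let 𝔓 be the quotient of 𝒫 by equation-identicality. Then the following are equivalent: (i) 𝒫 is principal (every class of 𝒫 has cardinality 2); (ii) every class of 𝒫 has cardinality 2 and no class of 𝒫 is a twin class; (iii) |𝒫| = 2p and |𝔓| = p/2; (iv) |𝒫| - |𝔓| = 3p/2; (v) |𝒫| - |𝔓| ≥ 3p/2; (vi) |𝒫| = 2p. -/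
/-- The classes meeting the equation `e` are the classes of the four indices over `e`. -/
theorem filter_mem_eqnsOf {p : ℕ} (Pt : Finpartition (Finset.univ : Finset (Idx p))) (e : Fin p) :
    (Pt.parts.filter fun P => e ∈ eqnsOf P) =
      (Finset.univ : Finset (Fin 2 × Fin 2)).image fun x => Pt.part (e, x) := by
  ext P
  simp only [Finset.mem_filter, Finset.mem_image, Finset.mem_univ, true_and, eqnsOf]
  constructor
  · rintro ⟨hP, ⟨e', x⟩, hx, rfl⟩
    exact ⟨x, Pt.part_eq_of_mem hP hx⟩
  · rintro ⟨x, rfl⟩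
    exact ⟨Pt.part_mem.2 (Finset.mem_univ _), (e, x), Pt.mem_part (Finset.mem_univ _), rfl⟩

theorem eqnsOf_nonempty {p : ℕ} (Pt : Finpartition (Finset.univ : Finset (Idx p)))
    {P : Finset (Idx p)} (hP : P ∈ Pt.parts) : (eqnsOf P).Nonempty :=
  (Pt.nonempty_of_mem_parts hP).image _

/-- Under separability, the classes of the block of `P` are all the classes meeting a given equation
of `P`. -/
theorem block_eq {p : ℕ} (Pt : Finpartition (Finset.univ : Finset (Idx p))) (hs : Separable Pt)
    {P : Finset (Idx p)} (hP : P ∈ Pt.parts) {e : Fin p} (he : e ∈ eqnsOf P) :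
    (Pt.parts.filter fun Q => eqnsOf Q = eqnsOf P) = Pt.parts.filter fun Q => e ∈ eqnsOf Q := by
  refine Finset.filter_congr fun Q hQ => ⟨fun h => h ▸ he, fun h => ?_⟩
  exact (hs Q hQ P hP).resolve_right fun hd => Finset.disjoint_left.1 hd h he

theorem card_block_le {p : ℕ} (Pt : Finpartition (Finset.univ : Finset (Idx p)))
    (hs : Separable Pt) {S : Finset (Fin p)} (hS : S ∈ Pt.parts.image eqnsOf) :
    (Pt.parts.filter fun Q => eqnsOf Q = S).card ≤ 4 := by
  obtain ⟨P, hP, rfl⟩ := Finset.mem_image.1 hS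
  obtain ⟨e, he⟩ := eqnsOf_nonempty Pt hP
  rw [block_eq Pt hs hP he, filter_mem_eqnsOf]
  exact Finset.card_image_le

theorem two_le_card_block {p : ℕ} (Pt : Finpartition (Finset.univ : Finset (Idx p)))
    (hg : GELO Pt) (hs : Separable Pt) {S : Finset (Fin p)} (hS : S ∈ Pt.parts.image eqnsOf) :
    2 ≤ S.card := by
  obtain ⟨P, hP, rfl⟩ := Finset.mem_image.1 hS
  by_contra hlt
  have hpos := (eqnsOf_nonempty Pt hP).card_pos
  obtain ⟨e, he⟩ := Finset.card_eq_one.1 (show (eqnsOf P).card = 1 by omega)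
  obtain ⟨Q, hQ, hodd⟩ := hg.2 e
  obtain ⟨x, hx⟩ := Finset.card_pos.1 hodd.pos
  rw [Finset.mem_filter] at hx
  have heQ : e ∈ eqnsOf Q := Finset.mem_image.2 ⟨x, hx⟩
  have hQP : eqnsOf Q = {e} := he ▸ (hs Q hQ P hP).resolve_right fun hd =>
    Finset.disjoint_left.1 hd heQ (he ▸ Finset.mem_singleton_self e)
  -- `Q` lies entirely over `e`, so its restriction to `e` is `Q` itself, of even cardinality.
  have hall : (Q.filter fun x => x.1 = e) = Q := Finset.filter_true_of_mem fun y hy =>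
    Finset.mem_singleton.1 (hQP ▸ Finset.mem_image_of_mem _ hy)
  rw [hall] at hodd
  exact Nat.not_even_iff_odd.2 hodd (hg.1 Q hQ)

/-- The blocks of equations partition `Fin p`. -/
theorem sum_card_blocks {p : ℕ} (Pt : Finpartition (Finset.univ : Finset (Idx p)))
    (hs : Separable Pt) : ∑ S ∈ Pt.parts.image eqnsOf, S.card = p := by
  have hd : (Pt.parts.image eqnsOf : Set (Finset (Fin p))).PairwiseDisjoint id := by
    intro S hS T hT hne
    obtain ⟨P, hP, rfl⟩ := Finset.mem_image.1 (Finset.mem_coe.1 hS)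
    obtain ⟨Q, hQ, rfl⟩ := Finset.mem_image.1 (Finset.mem_coe.1 hT)
    exact (hs P hP Q hQ).resolve_left hne
  have hU : (Pt.parts.image eqnsOf).biUnion id = Finset.univ := by
    refine Finset.eq_univ_iff_forall.2 fun e => Finset.mem_biUnion.2 ?_
    exact ⟨eqnsOf (Pt.part (e, 0, 0)),
      Finset.mem_image_of_mem _ (Pt.part_mem.2 (Finset.mem_univ _)),
      Finset.mem_image.2 ⟨_, Pt.mem_part (Finset.mem_univ _), rfl⟩⟩
  have h := Finset.card_biUnion hd
  rw [hU, Finset.card_univ, Fintype.card_fin] at h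
  exact h.symm

theorem card_parts_le {p : ℕ} (Pt : Finpartition (Finset.univ : Finset (Idx p)))
    (hs : Separable Pt) : Pt.parts.card ≤ 4 * quotCard Pt := by
  rw [Finset.card_eq_sum_card_image eqnsOf Pt.parts, quotCard, mul_comm, ← smul_eq_mul]
  exact Finset.sum_le_card_nsmul _ _ _ fun S hS => card_block_le Pt hs hS

theorem two_mul_quotCard_le {p : ℕ} (Pt : Finpartition (Finset.univ : Finset (Idx p)))
    (hg : GELO Pt) (hs : Separable Pt) : 2 * quotCard Pt ≤ p := by
  conv_rhs => rw [← sum_card_blocks Pt hs]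
  rw [quotCard, mul_comm, ← smul_eq_mul]
  exact Finset.card_nsmul_le_sum _ _ _ fun S hS => two_le_card_block Pt hg hs hS

/-- If the bound on the number of classes is attained, every class contains at most one index over
each equation. -/
theorem injOn_fst_of_card_eq {p : ℕ} (Pt : Finpartition (Finset.univ : Finset (Idx p)))
    (hs : Separable Pt) (h : Pt.parts.card = 4 * quotCard Pt) {P : Finset (Idx p)}
    (hP : P ∈ Pt.parts) : Set.InjOn (fun x : Idx p => x.1) P := by
  rintro ⟨e, x⟩ hx ⟨e', y⟩ hy (rfl : e = e')
  have he : e ∈ eqnsOf P := Finset.mem_image_of_mem (fun x : Idx p => x.1) hx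
  rw [Finset.card_eq_sum_card_image eqnsOf Pt.parts, quotCard, mul_comm, ← smul_eq_mul,
    ← Finset.sum_const, Finset.sum_eq_sum_iff_of_le fun S hS => card_block_le Pt hs hS] at h
  have h4 := h _ (Finset.mem_image_of_mem _ hP)
  rw [block_eq Pt hs hP he, filter_mem_eqnsOf] at h4
  -- Four distinct classes arise from the four indices over `e`, so `Pt.part` separates these.
  have hinj : Set.InjOn (fun x : Fin 2 × Fin 2 => Pt.part (e, x))
      ((Finset.univ : Finset (Fin 2 × Fin 2)) : Set (Fin 2 × Fin 2)) :=
    Finset.card_image_iff.1 h4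
  rw [hinj (Finset.mem_coe.2 (Finset.mem_univ x)) (Finset.mem_coe.2 (Finset.mem_univ y))
    ((Pt.part_eq_of_mem hP hx).trans (Pt.part_eq_of_mem hP hy).symm)]

theorem card_eqnsOf_of_card_eq {p : ℕ} (Pt : Finpartition (Finset.univ : Finset (Idx p)))
    (hg : GELO Pt) (hs : Separable Pt) (h : 2 * quotCard Pt = p) {P : Finset (Idx p)}
    (hP : P ∈ Pt.parts) : (eqnsOf P).card = 2 := by
  have h' := h.trans (sum_card_blocks Pt hs).symm
  rw [quotCard, mul_comm, ← smul_eq_mul, ← Finset.sum_const,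
    Finset.sum_eq_sum_iff_of_le fun S hS => two_le_card_block Pt hg hs hS] at h'
  exact (h' _ (Finset.mem_image_of_mem _ hP)).symm

/-- Equivalent characterizations of principality for a contributory separable
partition. -/
theorem principal_tfae {p : ℕ}
    (Pt : Finpartition (Finset.univ : Finset (Idx p)))
    (hc : Contributory Pt) (hs : Separable Pt) :
    List.TFAE
      [Principal Pt,
       ∀ P ∈ Pt.parts, P.card = 2 ∧ ¬IsTwin P,
       Pt.parts.card = 2 * p ∧ 2 * quotCard Pt = p,
       2 * (Pt.parts.card - quotCard Pt) = 3 * p,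
       3 * p ≤ 2 * (Pt.parts.card - quotCard Pt),
       Pt.parts.card = 2 * p] := by
  have hK := card_parts_le Pt hs
  have hq := two_mul_quotCard_le Pt hc.2 hs
  tfae_have 2 → 1 := fun h => ⟨hc, hs, fun P hP => (h P hP).1⟩
  tfae_have 1 → 6 := by
    rintro ⟨-, -, h⟩
    have h1 := Pt.sum_card_parts
    rw [Finset.sum_congr rfl h] at h1
    simp at h1
    omega
  tfae_have 6 → 2 := by
    intro h P hP
    have hinj := injOn_fst_of_card_eq Pt hs (by omega) hP
    refine ⟨?_, ?_⟩
    · rw [← Finset.card_image_of_injOn hinj]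
      exact card_eqnsOf_of_card_eq Pt hc.2 hs (by omega) hP
    · rintro ⟨e, s, h0, h1⟩
      simpa using hinj h0 h1 rfl
  -- The numerical conditions are equivalent by `hK` and `hq` alone.
  tfae_have 6 → 3 := by omega
  tfae_have 3 → 4 := by omega
  tfae_have 4 → 5 := by omega
  tfae_have 5 → 6 := by omega
  tfae_finish
end
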